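/- Fix μ>0 and R>0. Let φ be a real-analytic function satisfying □̃_μφ = 0 on an open set containing the closed ball {X∈ℝ⁴ : N(X) ≤ R²}. Then for every Y∈ℝ⁴ with N(Y) < R², φ(Y) = (√(1+μ²R²)/(2π²)) · ∫_{S³_R} (d̃eg φ)(X) · K_μ(X,Y) dS(X)/R. -/

import Mathlib

noncomputable section

open MeasureTheory

/-- Euclidean 4-space. -/
abbrev E4 := EuclideanSpace ℝ (Fin 4)

/-- `N(X) = (x⁰)² + (x¹)² + (x²)² + (x³)²` for `X ∈ ℝ⁴`. -/
def Nq (X : E4) : ℝ := ∑ i, X i ^ 2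

/-- The partial derivative `∂f/∂xⁱ` of a `ℂ`-valued function on `ℝ⁴`. -/
def pd (i : Fin 4) (f : E4 → ℂ) (X : E4) : ℂ := fderiv ℝ f X (EuclideanSpace.single i 1)

/-- The Laplacian `□f = Σᵢ ∂²f/∂(xⁱ)²`. -/
def lap (f : E4 → ℂ) (X : E4) : ℂ := ∑ i, pd i (pd i f) X

/-- The degree operator `deg f = Σᵢ xⁱ ∂f/∂xⁱ`. -/
def degOp (f : E4 → ℂ) (X : E4) : ℂ := ∑ i, (X i : ℂ) * pd i f X

/-- `d̃eg f = f + deg f`. -/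
def tdeg (f : E4 → ℂ) (X : E4) : ℂ := f X + degOp f X

/-- The conformal Laplacian `□̃_μ f = □f + μ²(deg(deg f) + 3·deg f + 2f)`. -/
def boxTilde (μ : ℝ) (f : E4 → ℂ) (X : E4) : ℂ :=
  lap f X + (μ ^ 2 : ℝ) * (degOp (degOp f) X + 3 * degOp f X + 2 * f X)

/-- The indefinite inner product `⟨W,W′⟩₍₁,₄₎` on `ℝ⁵`. -/
def form14 (W W' : Fin 5 → ℝ) : ℝ :=
  W 0 * W' 0 - W 1 * W' 1 - W 2 * W' 2 - W 3 * W' 3 - W 4 * W' 4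

/-- `X̂ = (√(μ⁻² + N(X)), x⁰, x¹, x², x³) ∈ ℝ⁵`. -/
def hat (μ : ℝ) (X : E4) : Fin 5 → ℝ :=
  Fin.cons (Real.sqrt ((μ ^ 2)⁻¹ + Nq X)) (fun i => X i)

/-- The Poisson kernel `K_μ(X,Y) = −1/⟨X̂−Ŷ, X̂−Ŷ⟩₍₁,₄₎`. -/
def Kmu (μ : ℝ) (X Y : E4) : ℝ :=
  -(form14 (hat μ X - hat μ Y) (hat μ X - hat μ Y))⁻¹

/-- Integral of `g` over the sphere `S³_R ⊂ ℝ⁴` of radius `R` centered at the origin with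
respect to the (non-normalized) Euclidean surface measure `dS`, of total mass `2π²R³`:
it is `R³` times the integral over the unit sphere with its Euclidean surface measure. -/
def sphereInt (R : ℝ) (g : E4 → ℂ) : ℂ :=
  (R ^ 3 : ℝ) • ∫ ω : Metric.sphere (0 : E4) 1,
    g (R • (ω : E4)) ∂(volume : Measure E4).toSphere

/-!
The operator `□̃_μ` is formally self-adjoint for the weight `1 / height μ`, where `height μ X` is
the zeroth coordinate of `X̂`. Hence for two solutions `f`, `h` on the ball, `h` possibly having a
pole of order two at a zero `Y` of `f`, Green's second identity says that `f · deg h - h · deg f`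
has integral zero over the sphere of radius `R`.

The reciprocal of `a * height μ - ⟪b, ·⟫ + c` is a solution whenever `μ² c² = a² - ‖b‖²`. One such
form is the denominator of `K_μ(·, Y)`, which vanishes at `Y`; a second one agrees with it on the
sphere and is positive on the ball, and on the sphere the degrees of the two add up to twice their
common value. Adding the two Green identities therefore gives `∫ d̃eg f · K_μ(·, Y) = 0` for every
solution `f` vanishing at `Y`. So the integral is a multiple of `f(Y)`, and the factor is found by
taking for `f` the radial solution `1 / (height μ + μ⁻¹)`. This requires `∫ K_μ(·, Y)`, which comes
from the mean value property at `0`, obtained by subtracting the two Green identities with `Y = 0`.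
-/

open Metric Filter Topology Asymptotics
open scoped RealInnerProductSpace Pointwise

section ParametricIntegral

lemma integrable_of_continuous_of_compactSpace {K F : Type*} [TopologicalSpace K] [CompactSpace K]
    [MeasurableSpace K] [OpensMeasurableSpace K] {ν : Measure K} [IsFiniteMeasureOnCompacts ν]
    [NormedAddCommGroup F] {f : K → F} (hf : Continuous f) : Integrable f ν :=
  hf.integrable_of_hasCompactSupport (.of_compactSpace f)

lemma hasDerivAt_integral_of_contDiffAt {E F : Type*} [NormedAddCommGroup E] [NormedSpace ℝ E]
    [MeasurableSpace E] [BorelSpace E] [NormedAddCommGroup F] [NormedSpace ℝ F] {K : Set E}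
    [CompactSpace K] {ν : Measure K} [IsFiniteMeasure ν] {Φ : ℝ × E → F} {t₀ : ℝ}
    (hΦ : ∀ ω : K, ContDiffAt ℝ 1 Φ (t₀, ω)) :
    HasDerivAt (fun t => ∫ ω : K, Φ (t, ω) ∂ν)
      (∫ ω : K, deriv (fun t => Φ (t, ω)) t₀ ∂ν) t₀ := by
  let Φ' : ℝ × E → F := fun p => fderiv ℝ Φ p (1, 0)
  have continuousAt_Φ' (ω : K) : ContinuousAt Φ' (t₀, ω) :=
    ((hΦ ω).fderiv_right (m := 0) le_rfl).continuousAt.clm_apply continuousAt_const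
  have hasDerivAt_Φ {t : ℝ} {ω : K} (h : ContDiffAt ℝ 1 Φ (t, ω)) :
      HasDerivAt (fun t => Φ (t, ω)) (Φ' (t, ω)) t :=
    (h.differentiableAt one_ne_zero).hasFDerivAt.comp_hasDerivAt t
      ((hasDerivAt_id t).prodMk (hasDerivAt_const t (ω : E)))
  have continuous_slice {t : ℝ} {Ψ : ℝ × E → F} (h : ∀ ω : K, ContinuousAt Ψ (t, ω)) :
      Continuous fun ω : K => Ψ (t, ω) :=
    continuous_iff_continuousAt.2 fun ω =>
      (h ω).comp (f := fun ω : K => (t, (ω : E))) (by fun_prop)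
  have continuous_slice_Φ' : Continuous fun ω : K => Φ' (t₀, ω) := continuous_slice continuousAt_Φ'
  have continuous_incl : Continuous fun p : ℝ × K => (p.1, (p.2 : E)) := by fun_prop
  have contDiffAt_near : ∀ᶠ t in 𝓝 t₀, ∀ ω : K, ContDiffAt ℝ 1 Φ (t, ω) := by
    simpa using isCompact_univ.eventually_forall_of_forall_eventually
      (P := fun t (ω : K) => ContDiffAt ℝ 1 Φ (t, ω)) fun ω _ =>
        continuous_incl.continuousAt.eventually ((hΦ ω).eventually (by simp))
  have bound_near : ∀ᶠ t in 𝓝 t₀, ∀ ω : K, ‖Φ' (t, ω)‖ < ‖Φ' (t₀, ω)‖ + 1 := by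
    simpa using isCompact_univ.eventually_forall_of_forall_eventually
      (P := fun t (ω : K) => ‖Φ' (t, ω)‖ < ‖Φ' (t₀, ω)‖ + 1) fun ω _ =>
        ((continuousAt_Φ' ω).norm.comp (x := (t₀, ω)) continuous_incl.continuousAt).eventually_lt
          (by fun_prop) (lt_add_one _)
  have key := hasDerivAt_integral_of_dominated_loc_of_deriv_le (μ := ν)
    (F := fun t (ω : K) => Φ (t, ω)) (F' := fun t (ω : K) => Φ' (t, ω))
    (bound := fun ω : K => ‖Φ' (t₀, ω)‖ + 1) (contDiffAt_near.and bound_near)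
    (contDiffAt_near.mono fun t ht => (integrable_of_continuous_of_compactSpace
      (continuous_slice fun ω => (ht ω).continuousAt)).aestronglyMeasurable)
    (integrable_of_continuous_of_compactSpace (continuous_slice fun ω => (hΦ ω).continuousAt))
    (integrable_of_continuous_of_compactSpace continuous_slice_Φ').aestronglyMeasurable
    (.of_forall fun ω t ht => (ht.2 ω).le)
    (integrable_of_continuous_of_compactSpace (continuous_slice_Φ'.norm.add continuous_const))
    (.of_forall fun ω t ht => hasDerivAt_Φ (ht.1 ω))
  simpa only [(hasDerivAt_Φ (hΦ _)).deriv] using key.2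

end ParametricIntegral

section SphereRotation

variable {E F : Type*} [NormedAddCommGroup E] [InnerProductSpace ℝ E] [FiniteDimensional ℝ E]
  [MeasurableSpace E] [BorelSpace E] [NormedAddCommGroup F] [NormedSpace ℝ F]

lemma integral_toSphere_comp_linearIsometryEquiv (L : E ≃ₗᵢ[ℝ] E) (f : E → F) :
    ∫ ω : sphere (0 : E) 1, f (L ω) ∂(volume : Measure E).toSphere =
      ∫ ω : sphere (0 : E) 1, f ω ∂(volume : Measure E).toSphere := by
  let e : sphere (0 : E) 1 ≃ₜ sphere (0 : E) 1 := L.toHomeomorph.subtype fun x => by simp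
  have preimage_cone (s : Set (sphere (0 : E) 1)) :
      Set.Ioo (0 : ℝ) 1 • ((↑) '' (e ⁻¹' s) : Set E) = L ⁻¹' (Set.Ioo (0 : ℝ) 1 • ((↑) '' s)) := by
    ext x
    simp only [Set.mem_smul, Set.mem_image, Set.mem_preimage]
    constructor
    · rintro ⟨r, hr, _, ⟨ω, hω, rfl⟩, rfl⟩
      exact ⟨r, hr, _, ⟨e ω, hω, rfl⟩, (map_smul L r (ω : E)).symm⟩
    · rintro ⟨r, hr, _, ⟨ω, hω, rfl⟩, hx⟩
      refine ⟨r, hr, _, ⟨e.symm ω, by simpa using hω, rfl⟩, ?_⟩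
      rw [← L.symm_apply_apply x, ← hx, map_smul]
      rfl
  have hpres : MeasurePreserving e (volume : Measure E).toSphere (volume : Measure E).toSphere := by
    refine ⟨e.measurable, Measure.ext fun s hs => ?_⟩
    rw [Measure.map_apply e.measurable hs, Measure.toSphere_apply' _ (e.measurable hs),
      Measure.toSphere_apply' _ hs, preimage_cone,
      L.measurePreserving.measure_preimage_emb L.toHomeomorph.measurableEmbedding]
  exact hpres.integral_comp e.measurableEmbedding fun ω => f ω

lemma integral_toSphere_fderiv_eq_zero_of_mem_skewAdjoint {J : E →L[ℝ] E}
    (hJ : J ∈ skewAdjoint (E →L[ℝ] E)) {f : E → F}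
    (hf : ∀ ω ∈ sphere (0 : E) 1, ContDiffAt ℝ 1 f ω) :
    ∫ ω : sphere (0 : E) 1, fderiv ℝ f ω (J ω) ∂(volume : Measure E).toSphere = 0 := by
  have hasDerivAt_rotate (x : E) (t : ℝ) :
      HasDerivAt (fun t : ℝ => NormedSpace.exp (t • J) x) (NormedSpace.exp (t • J) (J x)) t :=
    ((hasDerivAt_exp_smul_const (𝕂 := ℝ) J t).clm_apply (hasDerivAt_const t x)).congr_deriv
      (by simp)
  have integral_rotate (t : ℝ) :
      ∫ ω : sphere (0 : E) 1, f (NormedSpace.exp (t • J) ω) ∂(volume : Measure E).toSphere =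
        ∫ ω : sphere (0 : E) 1, f ω ∂(volume : Measure E).toSphere := by
    let : NormedAlgebra ℚ (E →L[ℝ] E) := .restrictScalars ℚ ℝ (E →L[ℝ] E)
    have hu : NormedSpace.exp (t • J) ∈ unitary (E →L[ℝ] E) :=
      NormedSpace.exp_mem_unitary_of_mem_skewAdjoint (skewAdjoint.smul_mem t hJ)
    exact integral_toSphere_comp_linearIsometryEquiv (Unitary.linearIsometryEquiv ⟨_, hu⟩) f
  have hderiv := hasDerivAt_integral_of_contDiffAt (ν := (volume : Measure E).toSphere)
    (Φ := fun p : ℝ × E => f (NormedSpace.exp (p.1 • J) p.2)) (t₀ := 0) fun ω => by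
      refine ContDiffAt.comp _ (by simpa using hf ω ω.2) ?_
      have hexp : ContDiffAt ℝ 1 (fun p : ℝ × E => NormedSpace.exp (p.1 • J)) (0, (ω : E)) :=
        ContDiffAt.comp (𝕜 := ℝ) _ (NormedSpace.exp_analytic _).contDiffAt (by fun_prop)
      exact hexp.clm_apply contDiffAt_snd
  simp only [integral_rotate] at hderiv
  rw [← hderiv.unique (hasDerivAt_const 0 _)]
  refine integral_congr_ae (.of_forall fun ω => ?_)
  have hfω : HasFDerivAt f (fderiv ℝ f ω) (NormedSpace.exp ((0 : ℝ) • J) (ω : E)) := by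
    simpa using ((hf ω ω.2).differentiableAt one_ne_zero).hasFDerivAt
  simpa [Function.comp_def] using (hfω.comp_hasDerivAt 0 (hasDerivAt_rotate ω 0)).deriv.symm

lemma integral_toSphere_inner_smul_fderiv_comm {f : E → F}
    (hf : ∀ ω ∈ sphere (0 : E) 1, ContDiffAt ℝ 1 f ω) (u v : E) :
    ∫ ω : sphere (0 : E) 1, (⟪u, ω⟫ • fderiv ℝ f ω v - ⟪v, ω⟫ • fderiv ℝ f ω u)
      ∂(volume : Measure E).toSphere = 0 := by
  have hskew : InnerProductSpace.rankOne ℝ v u - InnerProductSpace.rankOne ℝ u v ∈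
      skewAdjoint (E →L[ℝ] E) := by
    rw [skewAdjoint.mem_iff, star_sub]
    simp only [ContinuousLinearMap.star_eq_adjoint, InnerProductSpace.adjoint_rankOne, neg_sub]
  simpa using integral_toSphere_fderiv_eq_zero_of_mem_skewAdjoint hskew hf

end SphereRotation

section Flux

lemma ne_of_norm_lt_of_norm_eq {E : Type*} [NormedAddCommGroup E] {X Y : E} {R : ℝ}
    (hY : ‖Y‖ < R) (hX : ‖X‖ = R) : X ≠ Y :=
  fun h => hY.ne (h ▸ hX)

lemma norm_smul_of_mem_sphere {E : Type*} [NormedAddCommGroup E] [NormedSpace ℝ E] {R : ℝ}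
    (hR : 0 ≤ R) {ω : E} (hω : ω ∈ sphere (0 : E) 1) : ‖R • ω‖ = R := by
  rw [norm_smul, Real.norm_of_nonneg hR, mem_sphere_zero_iff_norm.1 hω, mul_one]

variable {ι F : Type*} [NormedAddCommGroup F] [NormedSpace ℝ F]

lemma fderiv_coord_smul_comp_dilation [Finite ι] {b : EuclideanSpace ℝ ι → F}
    {Y x : EuclideanSpace ℝ ι} {R t : ℝ} (hb : DifferentiableAt ℝ b (Y + t • (R • x - Y))) (j : ι)
    (v : EuclideanSpace ℝ ι) :
    fderiv ℝ (fun x => (R • x - Y) j • b (Y + t • (R • x - Y))) x v =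
      R • (v j • b (Y + t • (R • x - Y)) +
        (t * (R • x - Y) j) • fderiv ℝ b (Y + t • (R • x - Y)) v) := by
  cases nonempty_fintype ι
  have hcoord : HasFDerivAt (fun x : EuclideanSpace ℝ ι => (R • x - Y) j)
      (R • (EuclideanSpace.proj j : EuclideanSpace ℝ ι →L[ℝ] ℝ)) x :=
    ((R • (EuclideanSpace.proj j : EuclideanSpace ℝ ι →L[ℝ] ℝ)).hasFDerivAt).sub_const (Y j)
  have hdil : HasFDerivAt (fun x : EuclideanSpace ℝ ι => Y + t • (R • x - Y))
      (t • R • ContinuousLinearMap.id ℝ (EuclideanSpace ℝ ι)) x :=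
    ((((hasFDerivAt_id x).const_smul R).sub_const Y).const_smul t).const_add Y
  have hmul : HasFDerivAt (fun x => (R • x - Y) j • b (Y + t • (R • x - Y))) _ x :=
    hcoord.smul (hb.hasFDerivAt.comp x hdil)
  rw [hmul.fderiv]
  simp only [PiLp.sub_apply, PiLp.smul_apply, smul_eq_mul, ContinuousLinearMap.comp_smulₛₗ,
    Real.ringHom_apply, ContinuousLinearMap.comp_id, add_apply, smul_apply,
    ContinuousLinearMap.smulRight_apply, PiLp.proj_apply]
  module

variable [Fintype ι]

lemma hasDerivAt_pow_sub_one {n : ℕ} (hn : n ≠ 0) {t : ℝ} (ht : t ≠ 0) :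
    HasDerivAt (fun t : ℝ => t ^ (n - 1)) (t ^ (n - 1) / t * ((n : ℝ) - 1)) t := by
  obtain ⟨k, rfl⟩ := Nat.exists_eq_succ_of_ne_zero hn
  refine (hasDerivAt_pow k t).congr_deriv ?_
  rcases k with _ | k
  · simp
  · push_cast
    field_simp
    simp only [add_tsub_cancel_right, pow_succ]
    ring

lemma hasDerivAt_pow_smul_sum_coord_smul_dilation {B : ι → EuclideanSpace ℝ ι → F}
    {x Y : EuclideanSpace ℝ ι} {R t : ℝ} {n : ℕ} (hn : n ≠ 0) (ht : t ≠ 0)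
    (hB : ∀ i, DifferentiableAt ℝ (B i) (Y + t • (R • x - Y))) :
    HasDerivAt (fun t => t ^ (n - 1) • ∑ i, x i • B i (Y + t • (R • x - Y)))
      ((t ^ (n - 1) / t) • ∑ i, x i • (((n : ℝ) - 1) • B i (Y + t • (R • x - Y)) +
        t • fderiv ℝ (B i) (Y + t • (R • x - Y)) (R • x - Y))) t := by
  have hray : HasDerivAt (fun t : ℝ => Y + t • (R • x - Y)) (R • x - Y) t := by
    simpa using ((hasDerivAt_id t).smul_const (R • x - Y)).const_add Y
  have hsum := HasDerivAt.fun_sum fun i (_ : i ∈ Finset.univ) =>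
    ((hB i).hasFDerivAt.comp_hasDerivAt t hray).const_smul (x i)
  refine ((hasDerivAt_pow_sub_one hn ht).smul hsum).congr_deriv ?_
  simp only [Finset.smul_sum, ← Finset.sum_add_distrib]
  refine Finset.sum_congr rfl fun i _ => ?_
  have hpow : t ^ (n - 1) = t ^ (n - 1) / t * t := (div_mul_cancel₀ _ ht).symm
  change t ^ (n - 1) • x i • _ + (t ^ (n - 1) / t * (n - 1)) • x i • B i _ = _
  match_scalars
  · linear_combination x i * hpow
  · ring

/-- Up to the factor `(t * R) ^ (card ι - 1)`, the flux of `B` through the sphere of radius `t * R`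
obtained from `sphere 0 R` by the dilation of ratio `t` centred at `Y`. -/
def dilatedFlux (B : ι → EuclideanSpace ℝ ι → F) (Y : EuclideanSpace ℝ ι) (R t : ℝ) : F :=
  ∫ ω : sphere (0 : EuclideanSpace ℝ ι) 1,
    ∑ i, (ω : EuclideanSpace ℝ ι) i • B i (Y + t • (R • (ω : EuclideanSpace ℝ ι) - Y))
    ∂(volume : Measure (EuclideanSpace ℝ ι)).toSphere

lemma norm_pow_smul_dilatedFlux_le {B : ι → EuclideanSpace ℝ ι → F} {Y : EuclideanSpace ℝ ι}
    {R δ ε t : ℝ} {k : ℕ} (hY : ‖Y‖ < R) (ht : 0 < t) (htδ : t * (R + ‖Y‖) < δ)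
    (hB : ∀ x, 0 < ‖x - Y‖ → ‖x - Y‖ < δ → ∀ i, ‖x - Y‖ ^ k * ‖B i x‖ ≤ ε) :
    ‖t ^ k • dilatedFlux B Y R t‖ ≤ ε * (Fintype.card ι * ((R - ‖Y‖) ^ k)⁻¹ *
      (volume : Measure (EuclideanSpace ℝ ι)).toSphere.real Set.univ) := by
  have hR : 0 < R := (norm_nonneg Y).trans_lt hY
  have hRY : 0 < R - ‖Y‖ := sub_pos.2 hY
  rw [dilatedFlux, ← integral_smul]
  refine (norm_integral_le_of_norm_le_const (C := Fintype.card ι * (((R - ‖Y‖) ^ k)⁻¹ * ε)) <|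
    .of_forall fun ω => ?_).trans_eq (by ring)
  have hRω : ‖R • (ω : EuclideanSpace ℝ ι)‖ = R := norm_smul_of_mem_sphere hR.le ω.2
  have lower := hRω ▸ norm_sub_norm_le (R • (ω : EuclideanSpace ℝ ι)) Y
  have upper := hRω ▸ norm_sub_le (R • (ω : EuclideanSpace ℝ ι)) Y
  have dist_center : ‖Y + t • (R • (ω : EuclideanSpace ℝ ι) - Y) - Y‖ =
      t * ‖R • (ω : EuclideanSpace ℝ ι) - Y‖ := by
    rw [add_sub_cancel_left, norm_smul, Real.norm_of_nonneg ht.le]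
  have small := hB _ (dist_center ▸ mul_pos ht (hRY.trans_le lower))
    (dist_center ▸ (mul_le_mul_of_nonneg_left upper ht.le).trans_lt htδ)
  rw [dist_center] at small
  rw [Finset.smul_sum]
  refine (norm_sum_le_of_le (n := fun _ => ((R - ‖Y‖) ^ k)⁻¹ * ε) _ fun i _ => ?_).trans_eq
    (by rw [Finset.sum_const, Finset.card_univ, nsmul_eq_mul])
  rw [norm_smul, norm_smul, norm_pow, Real.norm_of_nonneg ht.le]
  have hωi : ‖(ω : EuclideanSpace ℝ ι) i‖ ≤ 1 :=
    (PiLp.norm_apply_le _ i).trans_eq (mem_sphere_zero_iff_norm.1 ω.2)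
  calc t ^ k * (‖(ω : EuclideanSpace ℝ ι) i‖ * ‖B i (Y + t • (R • (ω : EuclideanSpace ℝ ι) - Y))‖)
      ≤ t ^ k * (1 * ‖B i (Y + t • (R • (ω : EuclideanSpace ℝ ι) - Y))‖) := by gcongr
    _ = ((R - ‖Y‖) ^ k)⁻¹ *
        ((t * (R - ‖Y‖)) ^ k * ‖B i (Y + t • (R • (ω : EuclideanSpace ℝ ι) - Y))‖) := by
      rw [mul_pow]
      field_simp
    _ ≤ ((R - ‖Y‖) ^ k)⁻¹ * ((t * ‖R • (ω : EuclideanSpace ℝ ι) - Y‖) ^ k *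
        ‖B i (Y + t • (R • (ω : EuclideanSpace ℝ ι) - Y))‖) := by gcongr
    _ ≤ ((R - ‖Y‖) ^ k)⁻¹ * ε := by
      gcongr
      exact small i

lemma tendsto_pow_smul_dilatedFlux {B : ι → EuclideanSpace ℝ ι → F} {Y : EuclideanSpace ℝ ι}
    {R : ℝ} {k : ℕ} (hY : ‖Y‖ < R)
    (hpole : ∀ i, Tendsto (fun x => ‖x - Y‖ ^ k • B i x) (𝓝[≠] Y) (𝓝 0)) :
    Tendsto (fun t => t ^ k • dilatedFlux B Y R t) (𝓝[>] 0) (𝓝 0) := by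
  have : 0 < R - ‖Y‖ := sub_pos.2 hY
  let C := Fintype.card ι * ((R - ‖Y‖) ^ k)⁻¹ *
    (volume : Measure (EuclideanSpace ℝ ι)).toSphere.real Set.univ
  refine (isLittleO_one_iff ℝ).1 (isLittleO_iff.2 fun c hc => ?_)
  have hC : 0 < C + 1 := by positivity
  obtain ⟨δ, hδ, small⟩ : ∃ δ > 0, ∀ x, 0 < ‖x - Y‖ → ‖x - Y‖ < δ →
      ∀ i, ‖x - Y‖ ^ k * ‖B i x‖ ≤ c / (C + 1) := by
    have := eventually_all.2 fun i =>
      (hpole i).norm.eventually_le_const (u := c / (C + 1)) (by rw [norm_zero]; positivity)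
    obtain ⟨δ, hδ, h⟩ := Metric.eventually_nhds_iff.1 (eventually_nhdsWithin_iff.1 this)
    refine ⟨δ, hδ, fun x hx hxδ i => ?_⟩
    simpa [norm_smul] using
      h (by rwa [dist_eq_norm]) (by simpa [sub_eq_zero] using hx) i
  have dilation_near : ∀ᶠ t in 𝓝[>] (0 : ℝ), t * (R + ‖Y‖) < δ :=
    nhdsWithin_le_nhds <| (show Continuous fun t : ℝ => t * (R + ‖Y‖) by fun_prop).continuousAt
      |>.eventually_lt_const (by simpa using hδ)
  filter_upwards [dilation_near, self_mem_nhdsWithin] with t htδ ht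
  calc ‖t ^ k • dilatedFlux B Y R t‖
      ≤ c / (C + 1) * C := norm_pow_smul_dilatedFlux_le hY ht htδ small
    _ ≤ c / (C + 1) * (C + 1) := by gcongr; linarith
    _ = c * ‖(1 : ℝ)‖ := by rw [div_mul_cancel₀ _ hC.ne', norm_one, mul_one]

variable [DecidableEq ι]

/-- The divergence of the vector field on `ℝ^ι` with components `B i`, which may take values in
any real normed space. -/
def divergence (B : ι → EuclideanSpace ℝ ι → F) (x : EuclideanSpace ℝ ι) : F :=
  ∑ i, fderiv ℝ (B i) x (EuclideanSpace.single i 1)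

lemma map_eq_sum_smul_single (L : EuclideanSpace ℝ ι →L[ℝ] F) (v : EuclideanSpace ℝ ι) :
    L v = ∑ i, v i • L (EuclideanSpace.single i 1) := by
  conv_lhs => rw [← (EuclideanSpace.basisFun ι ℝ).sum_repr v]
  simp only [map_sum, map_smul, EuclideanSpace.basisFun_apply, EuclideanSpace.basisFun_repr]

-- The right side is the integrand of the `t`-derivative of the flux, and the left side is a sum of
-- derivatives along infinitesimal rotations, which integrate to zero over the sphere.
lemma sum_rotation_tensor_eq {B : ι → EuclideanSpace ℝ ι → F} {Y x : EuclideanSpace ℝ ι} {R t : ℝ}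
    (hB : ∀ i, DifferentiableAt ℝ (B i) (Y + t • (R • x - Y)))
    (hdiv : divergence B (Y + t • (R • x - Y)) = 0) :
    ∑ i, ∑ j,
      (x i • fderiv ℝ (fun x => (R • x - Y) j • B i (Y + t • (R • x - Y))) x
          (EuclideanSpace.single j 1) -
        x j • fderiv ℝ (fun x => (R • x - Y) j • B i (Y + t • (R • x - Y))) x
          (EuclideanSpace.single i 1)) =
      R • ∑ i, x i • (((Fintype.card ι : ℝ) - 1) • B i (Y + t • (R • x - Y)) +
        t • fderiv ℝ (B i) (Y + t • (R • x - Y)) (R • x - Y)) := by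
  simp only [fun i => fderiv_coord_smul_comp_dilation (hB i)]
  generalize Y + t • (R • x - Y) = p at *
  generalize R • x - Y = e at *
  have along_normal (i : ι) :
      ∑ j, x i • R • ((EuclideanSpace.single j (1 : ℝ) : EuclideanSpace ℝ ι) j • B i p +
        (t * e j) • fderiv ℝ (B i) p (EuclideanSpace.single j 1)) =
      R • x i • ((Fintype.card ι : ℝ) • B i p + t • fderiv ℝ (B i) p e) := by
    rw [map_eq_sum_smul_single (fderiv ℝ (B i) p) e]
    simp only [PiLp.single_apply, if_true, one_smul, mul_smul, ← Finset.smul_sum,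
      Finset.sum_add_distrib, Finset.sum_const, Finset.card_univ, Nat.cast_smul_eq_nsmul]
    rw [smul_comm]
  have along_divergence :
      ∑ i, ∑ j, x j • R • ((EuclideanSpace.single i (1 : ℝ) : EuclideanSpace ℝ ι) j • B i p +
        (t * e j) • fderiv ℝ (B i) p (EuclideanSpace.single i 1)) =
      R • ∑ i, x i • B i p := by
    have hzero : ∑ i, ∑ j, x j • (t * e j) • fderiv ℝ (B i) p (EuclideanSpace.single i 1) = 0 := by
      simp only [smul_smul, ← Finset.sum_smul, ← Finset.smul_sum]
      exact (congrArg _ hdiv).trans (smul_zero _)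
    simp only [smul_comm _ R, ← Finset.smul_sum, smul_add, Finset.sum_add_distrib, hzero]
    simp [PiLp.single_apply]
  simp only [Finset.sum_sub_distrib, along_normal, along_divergence, ← Finset.smul_sum, ← smul_sub]
  congr 1
  rw [← Finset.sum_sub_distrib]
  exact Finset.sum_congr rfl fun i _ => by module

lemma integral_sum_coord_smul_dilation_eq_zero {B : ι → EuclideanSpace ℝ ι → F}
    {Y : EuclideanSpace ℝ ι} {R t : ℝ} (hR : R ≠ 0)
    (hB : ∀ ω ∈ sphere (0 : EuclideanSpace ℝ ι) 1, ∀ i, ContDiffAt ℝ 1 (B i) (Y + t • (R • ω - Y)))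
    (hdiv : ∀ ω ∈ sphere (0 : EuclideanSpace ℝ ι) 1, divergence B (Y + t • (R • ω - Y)) = 0) :
    ∫ ω : sphere (0 : EuclideanSpace ℝ ι) 1,
      ∑ i, (ω : EuclideanSpace ℝ ι) i •
        (((Fintype.card ι : ℝ) - 1) • B i (Y + t • (R • (ω : EuclideanSpace ℝ ι) - Y)) +
          t • fderiv ℝ (B i) (Y + t • (R • (ω : EuclideanSpace ℝ ι) - Y)) (R • ω - Y))
      ∂(volume : Measure (EuclideanSpace ℝ ι)).toSphere = 0 := by
  let T (i j : ι) (x : EuclideanSpace ℝ ι) : F := (R • x - Y) j • B i (Y + t • (R • x - Y))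
  have hT (i j : ι) : ∀ ω ∈ sphere (0 : EuclideanSpace ℝ ι) 1, ContDiffAt ℝ 1 (T i j) ω :=
    fun ω hω => ContDiffAt.smul (by fun_prop)
      (ContDiffAt.comp (g := B i) (f := fun x => Y + t • (R • x - Y)) ω (hB ω hω i) (by fun_prop))
  have rotation_integral (i j : ι) :=
    integral_toSphere_inner_smul_fderiv_comm (hT i j) (.single i 1) (.single j 1)
  have rotation_integrable (i j : ι) : Integrable (fun ω : sphere (0 : EuclideanSpace ℝ ι) 1 =>
      (ω : EuclideanSpace ℝ ι) i • fderiv ℝ (T i j) ω (.single j 1) -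
        (ω : EuclideanSpace ℝ ι) j • fderiv ℝ (T i j) ω (.single i 1))
      (volume : Measure (EuclideanSpace ℝ ι)).toSphere := by
    have continuous_fderiv (v) :
        Continuous fun ω : sphere (0 : EuclideanSpace ℝ ι) 1 => fderiv ℝ (T i j) ω v :=
      continuous_iff_continuousAt.2 fun ω => ContinuousAt.comp (f := Subtype.val)
        (g := fun x => fderiv ℝ (T i j) x v)
        (((hT i j ω ω.2).fderiv_right (m := 0) le_rfl).continuousAt.clm_apply continuousAt_const)
        continuousAt_subtype_val
    have := continuous_fderiv (.single j 1)
    have := continuous_fderiv (.single i 1)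
    exact integrable_of_continuous_of_compactSpace (by fun_prop)
  refine (smul_eq_zero_iff_right hR).1 ?_
  rw [← integral_smul]
  calc _ = ∫ ω : sphere (0 : EuclideanSpace ℝ ι) 1, ∑ i, ∑ j,
          ((ω : EuclideanSpace ℝ ι) i • fderiv ℝ (T i j) ω (.single j 1) -
            (ω : EuclideanSpace ℝ ι) j • fderiv ℝ (T i j) ω (.single i 1))
          ∂(volume : Measure (EuclideanSpace ℝ ι)).toSphere :=
        integral_congr_ae <| .of_forall fun ω => (sum_rotation_tensor_eq
          (fun i => (hB ω ω.2 i).differentiableAt one_ne_zero) (hdiv ω ω.2)).symm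
    _ = 0 := by
      rw [integral_finsetSum _ fun i _ => integrable_finsetSum _ fun j _ => rotation_integrable i j]
      refine Finset.sum_eq_zero fun i _ => ?_
      rw [integral_finsetSum _ fun j _ => rotation_integrable i j]
      refine Finset.sum_eq_zero fun j _ => ?_
      simpa [EuclideanSpace.inner_single_left] using rotation_integral i j

lemma hasDerivAt_pow_smul_dilatedFlux [Nonempty ι] {B : ι → EuclideanSpace ℝ ι → F}
    {Y : EuclideanSpace ℝ ι} {R t : ℝ} (hR : R ≠ 0) (ht : t ≠ 0)
    (hB : ∀ ω ∈ sphere (0 : EuclideanSpace ℝ ι) 1, ∀ i, ContDiffAt ℝ 1 (B i) (Y + t • (R • ω - Y)))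
    (hdiv : ∀ ω ∈ sphere (0 : EuclideanSpace ℝ ι) 1, divergence B (Y + t • (R • ω - Y)) = 0) :
    HasDerivAt (fun t => t ^ (Fintype.card ι - 1) • dilatedFlux B Y R t) 0 t := by
  simp only [dilatedFlux, ← integral_smul]
  refine (hasDerivAt_integral_of_contDiffAt
    (Φ := fun p : ℝ × EuclideanSpace ℝ ι =>
      p.1 ^ (Fintype.card ι - 1) • ∑ i, p.2 i • B i (Y + p.1 • (R • p.2 - Y)))
    fun ω => ?_).congr_deriv ?_
  · exact ContDiffAt.smul (by fun_prop) <| ContDiffAt.sum fun i _ => ContDiffAt.smul (by fun_prop)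
      (ContDiffAt.comp (g := B i) (f := fun p : ℝ × EuclideanSpace ℝ ι => Y + p.1 • (R • p.2 - Y))
        _ (hB ω ω.2 i) (by fun_prop))
  · simp only [fun ω : sphere (0 : EuclideanSpace ℝ ι) 1 =>
      (hasDerivAt_pow_smul_sum_coord_smul_dilation (Fintype.card_ne_zero (α := ι)) ht fun i =>
        (hB ω ω.2 i).differentiableAt one_ne_zero).deriv]
    rw [integral_smul, integral_sum_coord_smul_dilation_eq_zero hR hB hdiv, smul_zero]

lemma integral_sphere_eq_zero_of_divergence_eq_zero [Nonempty ι] {B : ι → EuclideanSpace ℝ ι → F}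
    {Y : EuclideanSpace ℝ ι} {R : ℝ} (hY : ‖Y‖ < R)
    (hB : ∀ x ∈ closedBall 0 R \ {Y}, ∀ i, ContDiffAt ℝ 1 (B i) x)
    (hdiv : ∀ x ∈ closedBall 0 R \ {Y}, divergence B x = 0)
    (hpole : ∀ i, Tendsto (fun x => ‖x - Y‖ ^ (Fintype.card ι - 1) • B i x) (𝓝[≠] Y) (𝓝 0)) :
    ∫ ω : sphere (0 : EuclideanSpace ℝ ι) 1,
      ∑ i, (ω : EuclideanSpace ℝ ι) i • B i (R • (ω : EuclideanSpace ℝ ι))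
      ∂(volume : Measure (EuclideanSpace ℝ ι)).toSphere = 0 := by
  have hR : 0 < R := (norm_nonneg Y).trans_lt hY
  have dilation_mem {t : ℝ} (ht : t ∈ Set.Ioc 0 1) : ∀ ω ∈ sphere (0 : EuclideanSpace ℝ ι) 1,
      Y + t • (R • ω - Y) ∈ closedBall 0 R \ {Y} := by
    intro ω hω
    have hRω : ‖R • ω‖ = R := norm_smul_of_mem_sphere hR.le hω
    have hne : R • ω - Y ≠ 0 := sub_ne_zero.2 (ne_of_norm_lt_of_norm_eq hY hRω)
    refine ⟨?_, by simp [ht.1.ne', hne]⟩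
    exact (convex_closedBall 0 R).add_smul_sub_mem (by simpa using hY.le) (by simp [hRω])
      ⟨ht.1.le, ht.2⟩
  let m (t : ℝ) : F := t ^ (Fintype.card ι - 1) • dilatedFlux B Y R t
  have hm (t : ℝ) (ht : t ∈ Set.Ioc 0 1) : HasDerivAt m 0 t :=
    hasDerivAt_pow_smul_dilatedFlux hR.ne' ht.1.ne' (fun ω hω => hB _ (dilation_mem ht ω hω))
      fun ω hω => hdiv _ (dilation_mem ht ω hω)
  have m_eq : ∀ᶠ t in 𝓝[>] (0 : ℝ), m t = m 1 := by
    filter_upwards [Ioc_mem_nhdsGT one_pos] with t ht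
    exact (convex_Ioc (0 : ℝ) 1).is_const_of_fderivWithin_eq_zero (𝕜 := ℝ)
      (fun t ht => (hm t ht).differentiableAt.differentiableWithinAt)
      (fun t ht => by
        rw [(hm t ht).hasFDerivAt.hasFDerivWithinAt.fderivWithin
          (uniqueDiffOn_Ioc (0 : ℝ) 1 t ht)]
        simp) ht ⟨one_pos, le_rfl⟩
  have hm1 : m 1 = 0 := tendsto_nhds_unique
    (tendsto_const_nhds.congr' <| m_eq.mono fun _ h => h.symm)
    (tendsto_pow_smul_dilatedFlux hY hpole)
  simpa [m, dilatedFlux] using hm1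

end Flux

section Calculus

variable {f g : E4 → ℂ} {X : E4} {i : Fin 4}

lemma Nq_eq_norm_sq (X : E4) : Nq X = ‖X‖ ^ 2 := (EuclideanSpace.real_norm_sq_eq X).symm

lemma degOp_eq_fderiv (f : E4 → ℂ) (X : E4) : degOp f X = fderiv ℝ f X X := by
  simp only [degOp, pd, map_eq_sum_smul_single (fderiv ℝ f X) X, Complex.real_smul]

lemma pd_mul (hf : DifferentiableAt ℝ f X) (hg : DifferentiableAt ℝ g X) :
    pd i (fun Z => f Z * g Z) X = f X * pd i g X + g X * pd i f X := by
  simp [pd, fderiv_fun_mul hf hg]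

lemma degOp_mul (hf : DifferentiableAt ℝ f X) (hg : DifferentiableAt ℝ g X) :
    degOp (fun Z => f Z * g Z) X = f X * degOp g X + g X * degOp f X := by
  simp [degOp_eq_fderiv, fderiv_fun_mul hf hg]

lemma pd_sub (hf : DifferentiableAt ℝ f X) (hg : DifferentiableAt ℝ g X) :
    pd i (fun Z => f Z - g Z) X = pd i f X - pd i g X := by
  simp [pd, fderiv_fun_sub hf hg]

lemma degOp_sub (hf : DifferentiableAt ℝ f X) (hg : DifferentiableAt ℝ g X) :
    degOp (fun Z => f Z - g Z) X = degOp f X - degOp g X := by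
  simp [degOp_eq_fderiv, fderiv_fun_sub hf hg]

lemma contDiffAt_pd (hf : ContDiffAt ℝ 2 f X) (i : Fin 4) : ContDiffAt ℝ 1 (pd i f) X :=
  (hf.fderiv_right (m := 1) le_rfl).clm_apply contDiffAt_const

lemma contDiffAt_degOp (hf : ContDiffAt ℝ 2 f X) : ContDiffAt ℝ 1 (degOp f) X := by
  rw [funext (degOp_eq_fderiv f)]
  exact (hf.fderiv_right (m := 1) le_rfl).clm_apply contDiffAt_id

lemma pd_coord (i j : Fin 4) (X : E4) :
    pd i (fun Z => (Z j : ℂ)) X = if i = j then 1 else 0 := by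
  have hcoord : HasFDerivAt (fun Z : E4 => (Z j : ℂ))
      (Complex.ofRealCLM.comp (EuclideanSpace.proj j : E4 →L[ℝ] ℝ)) X :=
    (Complex.ofRealCLM.comp (EuclideanSpace.proj j : E4 →L[ℝ] ℝ)).hasFDerivAt
  rw [pd, hcoord.fderiv]
  simp [PiLp.single_apply, eq_comm, apply_ite]

end Calculus

section GreenField

/-- The zeroth coordinate of `X̂`. -/
def height (μ : ℝ) (X : E4) : ℝ := √((μ ^ 2)⁻¹ + Nq X)

/-- The value of `height μ` on the sphere of radius `R`. -/
def sphereHeight (μ R : ℝ) : ℝ := √((μ ^ 2)⁻¹ + R ^ 2)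

/-- The radial Wronskian `f · deg h - h · deg f`. -/
def degWronskian (f h : E4 → ℂ) (X : E4) : ℂ := f X * degOp h X - h X * degOp f X

/-- The vector field of Green's second identity for `□̃_μ`, before weighting. -/
def greenCurrent (μ : ℝ) (f h : E4 → ℂ) (i : Fin 4) (X : E4) : ℂ :=
  (f X * pd i h X - h X * pd i f X) + (μ ^ 2 : ℝ) * (X i * degWronskian f h X)

/-- The vector field of Green's second identity for `□̃_μ`. The weight `height⁻¹` is the one that
makes `□̃_μ` formally self-adjoint. -/
def greenField (μ : ℝ) (f h : E4 → ℂ) (i : Fin 4) (X : E4) : ℂ :=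
  ((height μ X)⁻¹ : ℝ) * greenCurrent μ f h i X

variable {μ : ℝ} {f h : E4 → ℂ} {X : E4}

lemma height_sq (μ : ℝ) (X : E4) : height μ X ^ 2 = (μ ^ 2)⁻¹ + ‖X‖ ^ 2 := by
  rw [height, Nq_eq_norm_sq, Real.sq_sqrt (by positivity)]

lemma height_pos (hμ : μ ≠ 0) (X : E4) : 0 < height μ X :=
  Real.sqrt_pos.2 (by rw [Nq_eq_norm_sq]; positivity)

lemma contDiff_height (hμ : μ ≠ 0) : ContDiff ℝ 2 (height μ) := by
  have hsq : ContDiff ℝ 2 fun X : E4 => (μ ^ 2)⁻¹ + Nq X := by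
    simp only [Nq_eq_norm_sq]
    exact contDiff_const.add (contDiff_norm_sq ℝ)
  exact hsq.sqrt fun X => by rw [Nq_eq_norm_sq]; positivity

lemma hasFDerivAt_height (hμ : μ ≠ 0) (X : E4) :
    HasFDerivAt (height μ) ((height μ X)⁻¹ • innerSL ℝ X) X := by
  have hsq : HasFDerivAt (fun X : E4 => (μ ^ 2)⁻¹ + Nq X) (2 • innerSL ℝ X) X := by
    simp only [Nq_eq_norm_sq]
    exact (hasStrictFDerivAt_norm_sq X).hasFDerivAt.const_add _
  refine (hsq.sqrt (by rw [Nq_eq_norm_sq]; positivity)).congr_fderiv ?_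
  rw [← height]
  module

lemma divergence_mul {v : E4 → ℂ} {A : Fin 4 → E4 → ℂ} (hv : DifferentiableAt ℝ v X)
    (hA : ∀ i, DifferentiableAt ℝ (A i) X) :
    divergence (fun i Z => v Z * A i Z) X = v X * divergence A X + ∑ i, A i X * pd i v X := by
  rw [divergence, divergence, Finset.mul_sum, ← Finset.sum_add_distrib]
  exact Finset.sum_congr rfl fun i _ => pd_mul hv (hA i)

lemma divergence_add {A B : Fin 4 → E4 → ℂ} (hA : ∀ i, DifferentiableAt ℝ (A i) X)
    (hB : ∀ i, DifferentiableAt ℝ (B i) X) :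
    divergence (fun i Z => A i Z + B i Z) X = divergence A X + divergence B X := by
  simp [divergence, fun i => fderiv_fun_add (hA i) (hB i), Finset.sum_add_distrib]

lemma divergence_mul_pd_sub (hf : ContDiffAt ℝ 2 f X) (hh : ContDiffAt ℝ 2 h X) :
    divergence (fun i Z => f Z * pd i h Z - h Z * pd i f Z) X = f X * lap h X - h X * lap f X := by
  have df := hf.differentiableAt two_ne_zero
  have dh := hh.differentiableAt two_ne_zero
  have dpf (i) := (contDiffAt_pd hf i).differentiableAt one_ne_zero
  have dph (i) := (contDiffAt_pd hh i).differentiableAt one_ne_zero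
  simp only [lap, Finset.mul_sum, ← Finset.sum_sub_distrib]
  refine Finset.sum_congr rfl fun i _ => ?_
  change pd i (fun Z => f Z * pd i h Z - h Z * pd i f Z) X = _
  rw [pd_sub (df.fun_mul (dph i)) (dh.fun_mul (dpf i)), pd_mul df (dph i), pd_mul dh (dpf i)]
  ring

lemma divergence_coord_mul {g : E4 → ℂ} (hg : DifferentiableAt ℝ g X) :
    divergence (fun i Z => (Z i : ℂ) * g Z) X = 4 * g X + degOp g X := by
  have hcoord (i : Fin 4) : DifferentiableAt ℝ (fun Z : E4 => (Z i : ℂ)) X := by fun_prop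
  calc divergence (fun i Z => (Z i : ℂ) * g Z) X
      = ∑ i, (X i * pd i g X + g X * pd i (fun Z => (Z i : ℂ)) X) :=
        Finset.sum_congr rfl fun i _ => pd_mul (hcoord i) hg
    _ = 4 * g X + degOp g X := by
      simp only [pd_coord, if_true, mul_one, Finset.sum_add_distrib, degOp, Finset.sum_const,
        Finset.card_univ, Fintype.card_fin, nsmul_eq_mul]
      push_cast
      ring

lemma contDiffAt_degWronskian (hf : ContDiffAt ℝ 2 f X) (hh : ContDiffAt ℝ 2 h X) :
    ContDiffAt ℝ 1 (degWronskian f h) X :=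
  ((hf.of_le one_le_two).mul (contDiffAt_degOp hh)).sub
    ((hh.of_le one_le_two).mul (contDiffAt_degOp hf))

lemma degOp_degWronskian (hf : ContDiffAt ℝ 2 f X) (hh : ContDiffAt ℝ 2 h X) :
    degOp (degWronskian f h) X = f X * degOp (degOp h) X - h X * degOp (degOp f) X := by
  have df := hf.differentiableAt two_ne_zero
  have dh := hh.differentiableAt two_ne_zero
  have ddf := (contDiffAt_degOp hf).differentiableAt one_ne_zero
  have ddh := (contDiffAt_degOp hh).differentiableAt one_ne_zero
  rw [show degWronskian f h = fun Z => f Z * degOp h Z - h Z * degOp f Z from rfl,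
    degOp_sub (df.fun_mul ddh) (dh.fun_mul ddf), degOp_mul df ddh, degOp_mul dh ddf]
  ring

lemma pd_height_inv (hμ : μ ≠ 0) (i : Fin 4) (X : E4) :
    pd i (fun Z => (((height μ Z)⁻¹ : ℝ) : ℂ)) X = -X i / (height μ X : ℂ) ^ 3 := by
  have hinv : HasFDerivAt (fun Z => (((height μ Z)⁻¹ : ℝ) : ℂ))
      (Complex.ofRealCLM.comp (-(height μ X ^ 2)⁻¹ • (height μ X)⁻¹ • innerSL ℝ X)) X :=
    Complex.ofRealCLM.hasFDerivAt.comp X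
      ((hasDerivAt_inv (height_pos hμ X).ne').comp_hasFDerivAt X (hasFDerivAt_height hμ X))
  have hne : (height μ X : ℂ) ≠ 0 := mod_cast (height_pos hμ X).ne'
  rw [pd, hinv.fderiv]
  simp only [ContinuousLinearMap.comp_apply, smul_apply, innerSL_apply_apply,
    EuclideanSpace.inner_single_right, Complex.ofRealCLM_apply, smul_eq_mul, conj_trivial, one_mul]
  push_cast
  field_simp

lemma one_add_mul_norm_sq (hμ : μ ≠ 0) (X : E4) :
    1 + μ ^ 2 * ‖X‖ ^ 2 = μ ^ 2 * height μ X ^ 2 := by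
  rw [height_sq]
  field_simp

lemma sum_coord_mul_coord (X : E4) : ∑ i, (X i : ℂ) * X i = (‖X‖ ^ 2 : ℝ) := by
  rw [← Nq_eq_norm_sq, Nq]
  push_cast
  simp only [sq]

lemma sum_coord_mul_greenCurrent (hμ : μ ≠ 0) (f h : E4 → ℂ) (X : E4) :
    ∑ i, (X i : ℂ) * greenCurrent μ f h i X =
      (μ ^ 2 * height μ X ^ 2 : ℝ) * degWronskian f h X := by
  have euclidean_part : ∑ i, (X i : ℂ) * (f X * pd i h X - h X * pd i f X) =
      degWronskian f h X := by
    simp only [degWronskian, degOp, Finset.mul_sum, ← Finset.sum_sub_distrib]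
    exact Finset.sum_congr rfl fun i _ => by ring
  have radial_part : ∑ i, (X i : ℂ) * ((μ ^ 2 : ℝ) * (X i * degWronskian f h X)) =
      (μ ^ 2 : ℝ) * (‖X‖ ^ 2 : ℝ) * degWronskian f h X := by
    simp only [← sum_coord_mul_coord, Finset.mul_sum, Finset.sum_mul]
    exact Finset.sum_congr rfl fun i _ => by ring
  simp only [greenCurrent, mul_add, Finset.sum_add_distrib, euclidean_part, radial_part,
    ← one_add_mul_norm_sq hμ]
  push_cast
  ring

lemma sum_coord_mul_greenField (hμ : μ ≠ 0) (f h : E4 → ℂ) (X : E4) :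
    ∑ i, (X i : ℂ) * greenField μ f h i X = (μ ^ 2 * height μ X : ℝ) * degWronskian f h X := by
  have hne : (height μ X : ℂ) ≠ 0 := mod_cast (height_pos hμ X).ne'
  simp only [greenField, mul_left_comm _ (((height μ X)⁻¹ : ℝ) : ℂ), ← Finset.mul_sum,
    sum_coord_mul_greenCurrent hμ]
  push_cast
  field_simp

lemma contDiffAt_greenCurrent (hf : ContDiffAt ℝ 2 f X) (hh : ContDiffAt ℝ 2 h X) (i : Fin 4) :
    ContDiffAt ℝ 1 (greenCurrent μ f h i) X := by
  have hcoord : ContDiffAt ℝ 1 (fun Z : E4 => (Z i : ℂ)) X :=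
    (Complex.ofRealCLM.comp (EuclideanSpace.proj i : E4 →L[ℝ] ℝ)).contDiff.contDiffAt
  exact (((hf.of_le one_le_two).mul (contDiffAt_pd hh i)).sub
    ((hh.of_le one_le_two).mul (contDiffAt_pd hf i))).add
      (contDiffAt_const.mul (hcoord.mul (contDiffAt_degWronskian hf hh)))

lemma contDiffAt_height_inv (hμ : μ ≠ 0) (X : E4) :
    ContDiffAt ℝ 1 (fun Z => (((height μ Z)⁻¹ : ℝ) : ℂ)) X :=
  Complex.ofRealCLM.contDiff.contDiffAt.comp X
    (((contDiff_height hμ).contDiffAt.of_le one_le_two).inv (height_pos hμ X).ne')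

lemma contDiffAt_greenField (hμ : μ ≠ 0) (hf : ContDiffAt ℝ 2 f X) (hh : ContDiffAt ℝ 2 h X)
    (i : Fin 4) : ContDiffAt ℝ 1 (greenField μ f h i) X :=
  (contDiffAt_height_inv hμ X).mul (contDiffAt_greenCurrent hf hh i)

lemma divergence_greenCurrent (hf : ContDiffAt ℝ 2 f X) (hh : ContDiffAt ℝ 2 h X) :
    divergence (greenCurrent μ f h) X =
      f X * boxTilde μ h X - h X * boxTilde μ f X + (μ ^ 2 : ℝ) * degWronskian f h X := by
  have hW := (contDiffAt_degWronskian hf hh).differentiableAt one_ne_zero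
  have dpf (i) := (contDiffAt_pd hf i).differentiableAt one_ne_zero
  have dph (i) := (contDiffAt_pd hh i).differentiableAt one_ne_zero
  have df := hf.differentiableAt two_ne_zero
  have dh := hh.differentiableAt two_ne_zero
  have hcoord (i : Fin 4) : DifferentiableAt ℝ (fun Z : E4 => (Z i : ℂ)) X := by fun_prop
  have hradial : divergence (fun i Z => ((μ ^ 2 : ℝ) : ℂ) * (Z i * degWronskian f h Z)) X =
      (μ ^ 2 : ℝ) * (4 * degWronskian f h X + degOp (degWronskian f h) X) := by
    rw [divergence_mul (differentiableAt_const _) fun i => (hcoord i).fun_mul hW,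
      divergence_coord_mul hW]
    simp [pd]
  unfold greenCurrent
  rw [divergence_add (fun i => (df.fun_mul (dph i)).fun_sub (dh.fun_mul (dpf i)))
    fun i => ((hcoord i).fun_mul hW).const_mul _, hradial, divergence_mul_pd_sub hf hh,
    degOp_degWronskian hf hh, boxTilde, boxTilde, degWronskian]
  ring

lemma divergence_greenField (hμ : μ ≠ 0) (hf : ContDiffAt ℝ 2 f X) (hh : ContDiffAt ℝ 2 h X) :
    divergence (greenField μ f h) X =
      ((height μ X)⁻¹ : ℝ) * (f X * boxTilde μ h X - h X * boxTilde μ f X) := by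
  have hne : (height μ X : ℂ) ≠ 0 := mod_cast (height_pos hμ X).ne'
  have weight_term : ∑ i, greenCurrent μ f h i X * pd i (fun Z => (((height μ Z)⁻¹ : ℝ) : ℂ)) X =
      -((height μ X)⁻¹ : ℝ) * ((μ ^ 2 : ℝ) * degWronskian f h X) := by
    calc _ = -((height μ X : ℂ) ^ 3)⁻¹ * ∑ i, (X i : ℂ) * greenCurrent μ f h i X := by
          simp only [pd_height_inv hμ, Finset.mul_sum]
          exact Finset.sum_congr rfl fun i _ => by ring
      _ = _ := by
        rw [sum_coord_mul_greenCurrent hμ]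
        push_cast
        field_simp
  unfold greenField
  rw [divergence_mul ((contDiffAt_height_inv hμ X).differentiableAt one_ne_zero)
    fun i => (contDiffAt_greenCurrent hf hh i).differentiableAt one_ne_zero,
    divergence_greenCurrent hf hh, weight_term]
  ring

lemma isBigO_mul_fderiv_sub {Y : E4} (hf : ContDiffAt ℝ 1 f Y) (hfY : f Y = 0)
    (hh : h =O[𝓝[≠] Y] fun X => (‖X - Y‖ ^ 2)⁻¹)
    (hdh : fderiv ℝ h =O[𝓝[≠] Y] fun X => (‖X - Y‖ ^ 3)⁻¹) {V : E4 → E4} (hV : ContinuousAt V Y) :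
    (fun X => f X * fderiv ℝ h X (V X) - h X * fderiv ℝ f X (V X)) =O[𝓝[≠] Y]
      fun X => (‖X - Y‖ ^ 2)⁻¹ := by
  have hV1 : V =O[𝓝[≠] Y] fun _ => (1 : ℝ) := (hV.isBigO_one ℝ).mono nhdsWithin_le_nhds
  have hf1 : f =O[𝓝[≠] Y] fun X => ‖X - Y‖ := by
    simpa [hfY] using
      ((hf.differentiableAt one_ne_zero).isBigO_sub.mono nhdsWithin_le_nhds).norm_right
  have hdf : fderiv ℝ f =O[𝓝[≠] Y] fun _ => (1 : ℝ) :=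
    ((hf.fderiv_right (m := 0) le_rfl).continuousAt.isBigO_one ℝ).mono nhdsWithin_le_nhds
  have clm_apply {k : E4 → ℂ} {b : E4 → ℝ} (hk : fderiv ℝ k =O[𝓝[≠] Y] b) :
      (fun X => fderiv ℝ k X (V X)) =O[𝓝[≠] Y] b := by
    simpa using (IsBigO.of_norm_le fun X => (fderiv ℝ k X).le_opNorm (V X)).trans
      (hk.norm_left.mul hV1.norm_left)
  refine .sub ((hf1.mul (clm_apply hdh)).congr_right fun X => ?_)
    ((hh.mul (clm_apply hdf)).congr_right fun X => mul_one _)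
  rcases eq_or_ne ‖X - Y‖ 0 with hX | hX
  · simp [hX]
  · field_simp

lemma tendsto_pow_smul_greenField (hμ : μ ≠ 0) {Y : E4} (hf : ContDiffAt ℝ 1 f Y) (hfY : f Y = 0)
    (hh : h =O[𝓝[≠] Y] fun X => (‖X - Y‖ ^ 2)⁻¹)
    (hdh : fderiv ℝ h =O[𝓝[≠] Y] fun X => (‖X - Y‖ ^ 3)⁻¹) (i : Fin 4) :
    Tendsto (fun X => ‖X - Y‖ ^ 3 • greenField μ f h i X) (𝓝[≠] Y) (𝓝 0) := by
  have isBigO_one {g : E4 → ℂ} (hg : ContinuousAt g Y) : g =O[𝓝[≠] Y] fun _ => (1 : ℝ) :=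
    (hg.isBigO_one ℝ).mono nhdsWithin_le_nhds
  have euclidean_part : (fun X => f X * pd i h X - h X * pd i f X) =O[𝓝[≠] Y]
      fun X => (‖X - Y‖ ^ 2)⁻¹ := isBigO_mul_fderiv_sub hf hfY hh hdh continuousAt_const
  have radial_part : (fun X => (X i : ℂ) * degWronskian f h X) =O[𝓝[≠] Y]
      fun X => 1 * (‖X - Y‖ ^ 2)⁻¹ := by
    simp only [degWronskian, degOp_eq_fderiv]
    exact (isBigO_one (by fun_prop)).mul (isBigO_mul_fderiv_sub hf hfY hh hdh continuousAt_id)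
  have hgreen : greenField μ f h i =O[𝓝[≠] Y] fun X => 1 * (‖X - Y‖ ^ 2)⁻¹ :=
    (isBigO_one (contDiffAt_height_inv hμ Y).continuousAt).mul
      (euclidean_part.add ((radial_part.const_mul_left _).congr_right fun X => one_mul _))
  have hprod := (isBigO_refl (fun X => ‖X - Y‖ ^ 3) (𝓝[≠] Y)).smul hgreen
  refine (hprod.congr_right fun X => ?_).trans_tendsto (g'' := fun X => ‖X - Y‖) ?_
  · rcases eq_or_ne ‖X - Y‖ 0 with hX | hX
    · simp [hX]
    · simp only [smul_eq_mul]
      field_simp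
  · exact tendsto_nhdsWithin_of_tendsto_nhds
      ((show Continuous fun X : E4 => ‖X - Y‖ by fun_prop).tendsto' _ _ (by simp))

end GreenField

section SphereOrthogonality

/-- `f` is of class `C²` at `X` and solves `□̃_μ f = 0` there. -/
def IsSolutionAt (μ : ℝ) (f : E4 → ℂ) (X : E4) : Prop :=
  ContDiffAt ℝ 2 f X ∧ boxTilde μ f X = 0

variable {μ R : ℝ} {f h : E4 → ℂ} {Y : E4}

lemma sphereHeight_pos (μ : ℝ) (hR : 0 < R) : 0 < sphereHeight μ R :=
  Real.sqrt_pos.2 (by positivity)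

lemma height_of_norm_eq {X : E4} (hX : ‖X‖ = R) : height μ X = sphereHeight μ R := by
  rw [height, sphereHeight, Nq_eq_norm_sq, hX]

theorem integral_degWronskian_eq_zero (hμ : μ ≠ 0) (hY : ‖Y‖ < R)
    (hf : ∀ X ∈ closedBall 0 R, IsSolutionAt μ f X) (hfY : f Y = 0)
    (hh : ∀ X ∈ closedBall 0 R \ {Y}, IsSolutionAt μ h X)
    (hpole : h =O[𝓝[≠] Y] fun X => (‖X - Y‖ ^ 2)⁻¹)
    (hdpole : fderiv ℝ h =O[𝓝[≠] Y] fun X => (‖X - Y‖ ^ 3)⁻¹) :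
    ∫ ω : sphere (0 : E4) 1, degWronskian f h (R • (ω : E4))
      ∂(volume : Measure E4).toSphere = 0 := by
  have hR : 0 < R := (norm_nonneg Y).trans_lt hY
  have hfY' := (hf Y (by simpa using hY.le)).1.of_le one_le_two
  have flux := integral_sphere_eq_zero_of_divergence_eq_zero (B := greenField μ f h) hY
    (fun X hX => contDiffAt_greenField hμ (hf X hX.1).1 (hh X hX).1)
    (fun X hX => by
      rw [divergence_greenField hμ (hf X hX.1).1 (hh X hX).1, (hf X hX.1).2, (hh X hX).2]
      simp)
    (tendsto_pow_smul_greenField hμ hfY' hfY hpole hdpole)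
  have normal_component (ω : sphere (0 : E4) 1) :
      ∑ i, (ω : E4) i • greenField μ f h i (R • (ω : E4)) =
        (R⁻¹ * (μ ^ 2 * sphereHeight μ R) : ℝ) * degWronskian f h (R • (ω : E4)) := by
    rw [Complex.ofReal_mul, mul_assoc, ← height_of_norm_eq (X := R • (ω : E4))
      (norm_smul_of_mem_sphere hR.le ω.2), ← sum_coord_mul_greenField hμ, Finset.mul_sum]
    refine Finset.sum_congr rfl fun i _ => ?_
    have : (R : ℂ) ≠ 0 := mod_cast hR.ne'
    simp only [PiLp.smul_apply, smul_eq_mul, Complex.real_smul]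
    push_cast
    field_simp
  simp only [normal_component, integral_const_mul] at flux
  refine (mul_eq_zero.1 flux).resolve_left ?_
  have hW := sphereHeight_pos μ hR
  have : 0 < R⁻¹ * (μ ^ 2 * sphereHeight μ R) := by positivity
  exact_mod_cast this.ne'

end SphereOrthogonality

section SecondOrderRules

variable {E : Type*} [NormedAddCommGroup E] [NormedSpace ℝ E] {f g : E → ℂ} {V : E → E} {X : E}

lemma fderiv_inv_eq_smul (hf : DifferentiableAt ℝ f X) (h0 : f X ≠ 0) :
    fderiv ℝ (fun Z => (f Z)⁻¹) X = -(f X ^ 2)⁻¹ • fderiv ℝ f X := by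
  have hinv : HasFDerivAt (fun Z => (f Z)⁻¹) _ X := (hasFDerivAt_inv' h0).comp X hf.hasFDerivAt
  rw [hinv.fderiv]
  ext v
  simp only [ContinuousLinearMap.comp_apply, neg_apply,
    ContinuousLinearMap.mulLeftRight_apply, smul_apply, smul_eq_mul]
  field_simp

lemma differentiableAt_fderiv_apply (hf : ContDiffAt ℝ 2 f X) (hV : DifferentiableAt ℝ V X) :
    DifferentiableAt ℝ (fun Z => fderiv ℝ f Z (V Z)) X :=
  ((hf.fderiv_right (m := 1) le_rfl).differentiableAt one_ne_zero).clm_apply hV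

lemma eventually_differentiableAt (hf : ContDiffAt ℝ 2 f X) :
    ∀ᶠ Z in 𝓝 X, DifferentiableAt ℝ f Z :=
  (hf.eventually (by simp)).mono fun _ h => h.differentiableAt two_ne_zero

lemma fderiv_fderiv_inv_apply (hf : ContDiffAt ℝ 2 f X) (hV : DifferentiableAt ℝ V X)
    (h0 : f X ≠ 0) (v : E) :
    fderiv ℝ (fun Z => fderiv ℝ (fun Z => (f Z)⁻¹) Z (V Z)) X v =
      -fderiv ℝ (fun Z => fderiv ℝ f Z (V Z)) X v / f X ^ 2 +
        2 * fderiv ℝ f X (V X) * fderiv ℝ f X v / f X ^ 3 := by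
  have df := hf.differentiableAt two_ne_zero
  have dinv : DifferentiableAt ℝ (fun Z => (f Z)⁻¹) X := df.fun_inv h0
  have dVf := differentiableAt_fderiv_apply hf hV
  have first_order : (fun Z => fderiv ℝ (fun Z => (f Z)⁻¹) Z (V Z)) =ᶠ[𝓝 X]
      fun Z => -(fderiv ℝ f Z (V Z) * ((f Z)⁻¹ * (f Z)⁻¹)) := by
    filter_upwards [eventually_differentiableAt hf, hf.continuousAt.eventually_ne h0] with Z hZ hZ0
    rw [fderiv_inv_eq_smul hZ hZ0, smul_apply, smul_eq_mul]
    field_simp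
  rw [first_order.fderiv_eq, fderiv_fun_neg, fderiv_fun_mul dVf (dinv.fun_mul dinv),
    fderiv_fun_mul dinv dinv]
  simp only [fderiv_inv_eq_smul df h0, neg_apply,
    add_apply, smul_apply, smul_eq_mul]
  field_simp
  ring

lemma fderiv_fderiv_sub_const_mul_apply (hf : ContDiffAt ℝ 2 f X) (hg : ContDiffAt ℝ 2 g X)
    (hV : DifferentiableAt ℝ V X) (c : ℂ) (v : E) :
    fderiv ℝ (fun Z => fderiv ℝ (fun Z => f Z - c * g Z) Z (V Z)) X v =
      fderiv ℝ (fun Z => fderiv ℝ f Z (V Z)) X v -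
        c * fderiv ℝ (fun Z => fderiv ℝ g Z (V Z)) X v := by
  have first_order : (fun Z => fderiv ℝ (fun Z => f Z - c * g Z) Z (V Z)) =ᶠ[𝓝 X]
      fun Z => fderiv ℝ f Z (V Z) - c * fderiv ℝ g Z (V Z) := by
    filter_upwards [eventually_differentiableAt hf, eventually_differentiableAt hg] with Z hfZ hgZ
    rw [fderiv_fun_sub hfZ (hgZ.const_mul c), fderiv_const_mul hgZ]
    simp
  have dVf := differentiableAt_fderiv_apply hf hV
  have dVg := differentiableAt_fderiv_apply hg hV
  rw [first_order.fderiv_eq, fderiv_fun_sub dVf (dVg.const_mul c), fderiv_const_mul dVg]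
  simp

end SecondOrderRules

section Solutions

variable {μ : ℝ} {f g : E4 → ℂ} {X : E4}

lemma degOp_degOp_eq_fderiv (f : E4 → ℂ) (X : E4) :
    degOp (degOp f) X = fderiv ℝ (fun Z => fderiv ℝ f Z Z) X X := by
  rw [degOp_eq_fderiv, funext (degOp_eq_fderiv f)]

lemma degOp_inv (hf : DifferentiableAt ℝ f X) (h0 : f X ≠ 0) :
    degOp (fun Z => (f Z)⁻¹) X = -degOp f X / f X ^ 2 := by
  rw [degOp_eq_fderiv, fderiv_inv_eq_smul hf h0, smul_apply, smul_eq_mul,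
    degOp_eq_fderiv]
  ring

lemma boxTilde_inv (hf : ContDiffAt ℝ 2 f X) (h0 : f X ≠ 0) :
    boxTilde μ (fun Z => (f Z)⁻¹) X = (2 * ∑ i, pd i f X ^ 2 - f X * lap f X + (μ ^ 2 : ℝ) *
      (2 * degOp f X ^ 2 - f X * degOp (degOp f) X - 3 * f X * degOp f X + 2 * f X ^ 2)) /
        f X ^ 3 := by
  have lap_inv : lap (fun Z => (f Z)⁻¹) X =
      -lap f X / f X ^ 2 + 2 * (∑ i, pd i f X ^ 2) / f X ^ 3 := by
    simp only [lap, Finset.mul_sum, ← Finset.sum_neg_distrib, Finset.sum_div,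
      ← Finset.sum_add_distrib]
    refine Finset.sum_congr rfl fun i _ =>
      (fderiv_fderiv_inv_apply hf (differentiableAt_const _) h0 _).trans ?_
    rw [pow_two (pd i f X), ← mul_assoc]
    rfl
  have degOp_degOp_inv : degOp (degOp fun Z => (f Z)⁻¹) X =
      -degOp (degOp f) X / f X ^ 2 + 2 * degOp f X ^ 2 / f X ^ 3 := by
    rw [degOp_degOp_eq_fderiv, fderiv_fderiv_inv_apply hf differentiableAt_fun_id h0,
      degOp_degOp_eq_fderiv, degOp_eq_fderiv, pow_two (fderiv ℝ f X X), ← mul_assoc]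
  rw [boxTilde, lap_inv, degOp_degOp_inv, degOp_inv (hf.differentiableAt two_ne_zero) h0]
  field_simp
  ring

lemma degOp_sub_const_mul (hf : DifferentiableAt ℝ f X) (hg : DifferentiableAt ℝ g X) (c : ℂ) :
    degOp (fun Z => f Z - c * g Z) X = degOp f X - c * degOp g X := by
  simp [degOp_eq_fderiv, fderiv_fun_sub hf (hg.const_mul c), fderiv_const_mul hg]

lemma IsSolutionAt.sub_const_mul (hf : IsSolutionAt μ f X) (hg : IsSolutionAt μ g X) (c : ℂ) :
    IsSolutionAt μ (fun Z => f Z - c * g Z) X := by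
  refine ⟨hf.1.sub (contDiffAt_const.mul hg.1), ?_⟩
  have lap_lin : lap (fun Z => f Z - c * g Z) X = lap f X - c * lap g X := by
    simp only [lap, Finset.mul_sum, ← Finset.sum_sub_distrib]
    exact Finset.sum_congr rfl fun i _ =>
      fderiv_fderiv_sub_const_mul_apply hf.1 hg.1 (differentiableAt_const _) c _
  have degOp_degOp_lin : degOp (degOp fun Z => f Z - c * g Z) X =
      degOp (degOp f) X - c * degOp (degOp g) X := by
    simp only [degOp_degOp_eq_fderiv]
    exact fderiv_fderiv_sub_const_mul_apply hf.1 hg.1 differentiableAt_fun_id c X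
  calc boxTilde μ (fun Z => f Z - c * g Z) X = boxTilde μ f X - c * boxTilde μ g X := by
        rw [boxTilde, lap_lin, degOp_degOp_lin, boxTilde, boxTilde,
          degOp_sub_const_mul (hf.1.differentiableAt two_ne_zero)
            (hg.1.differentiableAt two_ne_zero)]
        ring
    _ = 0 := by rw [hf.2, hg.2, mul_zero, sub_zero]

/-- The restriction to the hyperboloid `{X̂}` of the affine function `⟨(a, b), ·⟩₍₁,₄₎ + c` on
`ℝ⁵`, as a function of `X`. -/
def affineForm (μ a : ℝ) (b : E4) (c : ℝ) (X : E4) : ℝ := a * height μ X - ⟪b, X⟫ + c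

variable {a c : ℝ} {b : E4}

lemma hasFDerivAt_affineForm (hμ : μ ≠ 0) (a : ℝ) (b : E4) (c : ℝ) (X : E4) :
    HasFDerivAt (affineForm μ a b c) (a • (height μ X)⁻¹ • innerSL ℝ X - innerSL ℝ b) X :=
  (((hasFDerivAt_height hμ X).const_mul a).sub (innerSL ℝ b).hasFDerivAt).add_const c

lemma fderiv_affineForm_apply (hμ : μ ≠ 0) (a : ℝ) (b : E4) (c : ℝ) (X v : E4) :
    fderiv ℝ (fun Z => (affineForm μ a b c Z : ℂ)) X v =
      (a * (height μ X)⁻¹ * ⟪X, v⟫ - ⟪b, v⟫ : ℝ) := by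
  have hform : HasFDerivAt (fun Z => (affineForm μ a b c Z : ℂ)) _ X :=
    Complex.ofRealCLM.hasFDerivAt.comp X (hasFDerivAt_affineForm hμ a b c X)
  rw [hform.fderiv]
  simp [mul_assoc]

lemma contDiff_affineForm (hμ : μ ≠ 0) (a : ℝ) (b : E4) (c : ℝ) :
    ContDiff ℝ 2 fun X => (affineForm μ a b c X : ℂ) :=
  Complex.ofRealCLM.contDiff.comp
    (((contDiff_const.mul (contDiff_height hμ)).sub (innerSL ℝ b).contDiff).add contDiff_const)

lemma degOp_height_inv (hμ : μ ≠ 0) (X : E4) :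
    degOp (fun Z => (((height μ Z)⁻¹ : ℝ) : ℂ)) X = -(‖X‖ ^ 2 : ℝ) / (height μ X : ℂ) ^ 3 := by
  simp only [degOp, pd_height_inv hμ, ← sum_coord_mul_coord, neg_div, Finset.sum_div, mul_neg,
    Finset.sum_neg_distrib, mul_div_assoc]

lemma pd_affineForm (hμ : μ ≠ 0) (a : ℝ) (b : E4) (c : ℝ) (i : Fin 4) (X : E4) :
    pd i (fun Z => (affineForm μ a b c Z : ℂ)) X = (((a / height μ X) • X - b) i : ℝ) := by
  rw [pd, fderiv_affineForm_apply hμ]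
  simp [EuclideanSpace.inner_single_right, div_eq_mul_inv]

lemma sum_pd_affineForm_sq (hμ : μ ≠ 0) (a : ℝ) (b : E4) (c : ℝ) (X : E4) :
    ∑ i, pd i (fun Z => (affineForm μ a b c Z : ℂ)) X ^ 2 =
      ((a / height μ X) ^ 2 * ‖X‖ ^ 2 - 2 * (a / height μ X * ⟪b, X⟫) + ‖b‖ ^ 2 : ℝ) := by
  simp only [pd_affineForm hμ, ← Complex.ofReal_pow, ← Complex.ofReal_sum]
  rw [← EuclideanSpace.real_norm_sq_eq, norm_sub_sq_real, norm_smul, mul_pow, Real.norm_eq_abs,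
    sq_abs, real_inner_smul_left, real_inner_comm]

lemma lap_affineForm (hμ : μ ≠ 0) (a : ℝ) (b : E4) (c : ℝ) (X : E4) :
    lap (fun Z => (affineForm μ a b c Z : ℂ)) X =
      (a * (4 / height μ X - ‖X‖ ^ 2 / height μ X ^ 3) : ℝ) := by
  have hinv := (contDiffAt_height_inv hμ X).differentiableAt one_ne_zero
  have hcoord (i : Fin 4) : DifferentiableAt ℝ (fun Z : E4 => (Z i : ℂ)) X := by fun_prop
  have pd_pd (i : Fin 4) : pd i (pd i fun Z => (affineForm μ a b c Z : ℂ)) X =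
      a * pd i (fun Z => (Z i : ℂ) * ((height μ Z)⁻¹ : ℝ)) X := by
    have hpd : (pd i fun Z => (affineForm μ a b c Z : ℂ)) =
        fun Z => (a : ℂ) * ((Z i : ℂ) * ((height μ Z)⁻¹ : ℝ)) - b i := by
      ext Z
      rw [pd_affineForm hμ, PiLp.sub_apply, PiLp.smul_apply, smul_eq_mul]
      push_cast
      ring
    rw [hpd, pd, pd, fderiv_sub_const, fderiv_const_mul ((hcoord i).fun_mul hinv)]
    rfl
  calc lap (fun Z => (affineForm μ a b c Z : ℂ)) X
      = a * divergence (fun i Z => (Z i : ℂ) * ((height μ Z)⁻¹ : ℝ)) X := by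
        rw [divergence, Finset.mul_sum]
        exact Finset.sum_congr rfl fun i _ => pd_pd i
    _ = _ := by
        rw [divergence_coord_mul hinv, degOp_height_inv hμ]
        push_cast
        ring

lemma degOp_affineForm (hμ : μ ≠ 0) (a : ℝ) (b : E4) (c : ℝ) (X : E4) :
    degOp (fun Z => (affineForm μ a b c Z : ℂ)) X = (a * ‖X‖ ^ 2 / height μ X - ⟪b, X⟫ : ℝ) := by
  rw [degOp_eq_fderiv, fderiv_affineForm_apply hμ, real_inner_self_eq_norm_sq]
  congr 1
  ring

lemma degOp_degOp_affineForm (hμ : μ ≠ 0) (a : ℝ) (b : E4) (c : ℝ) (X : E4) :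
    degOp (degOp fun Z => (affineForm μ a b c Z : ℂ)) X =
      (a * ‖X‖ ^ 2 / height μ X - ⟪b, X⟫ + a * (μ ^ 2)⁻¹ * ‖X‖ ^ 2 / height μ X ^ 3 : ℝ) := by
  have degOp_eq : (degOp fun Z => (affineForm μ a b c Z : ℂ)) =
      fun Z => (affineForm μ a b 0 Z : ℂ) - (a * (μ ^ 2)⁻¹ : ℝ) * ((height μ Z)⁻¹ : ℝ) := by
    ext Z
    have hw := (height_pos hμ Z).ne'
    have hN : ‖Z‖ ^ 2 = height μ Z ^ 2 - (μ ^ 2)⁻¹ := by rw [height_sq]; ring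
    rw [degOp_affineForm hμ, affineForm, hN, ← Complex.ofReal_mul, ← Complex.ofReal_sub]
    congr 1
    field_simp
    ring
  have hform := (contDiff_affineForm hμ a b 0).contDiffAt.differentiableAt (x := X) two_ne_zero
  have hinv := (contDiffAt_height_inv hμ X).differentiableAt one_ne_zero
  rw [degOp_eq, degOp_sub hform (hinv.const_mul _), degOp_affineForm hμ,
    degOp_mul (differentiableAt_const _) hinv, degOp_height_inv hμ, degOp_eq_fderiv,
    fderiv_fun_const, Pi.zero_apply, zero_apply]
  push_cast
  ring

lemma isSolutionAt_affineForm_inv (hμ : μ ≠ 0) (hc : c ^ 2 = (μ ^ 2)⁻¹ * (a ^ 2 - ‖b‖ ^ 2))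
    (hX : affineForm μ a b c X ≠ 0) :
    IsSolutionAt μ (fun Z => (affineForm μ a b c Z : ℂ)⁻¹) X := by
  have hX' : (affineForm μ a b c X : ℂ) ≠ 0 := mod_cast hX
  have hform := (contDiff_affineForm hμ a b c).contDiffAt (x := X)
  refine ⟨hform.inv hX', ?_⟩
  rw [boxTilde_inv hform hX', div_eq_zero_iff]
  left
  rw [sum_pd_affineForm_sq hμ, lap_affineForm hμ, degOp_degOp_affineForm hμ, degOp_affineForm hμ]
  norm_cast
  have hw := (height_pos hμ X).ne'
  have hN : ‖X‖ ^ 2 = height μ X ^ 2 - (μ ^ 2)⁻¹ := by rw [height_sq]; ring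
  rw [affineForm, hN]
  field_simp at hc ⊢
  linear_combination 2 * μ ^ 2 * height μ X ^ 3 * hc

end Solutions

section PoleForm

/-- The denominator of the Poisson kernel: `K_μ(X, Y) = (2 * poleForm μ Y X)⁻¹`. -/
def poleForm (μ : ℝ) (Y : E4) : E4 → ℝ := affineForm μ (height μ Y) Y (-(μ ^ 2)⁻¹)

variable {μ : ℝ} {X Y : E4}

lemma poleForm_apply (μ : ℝ) (X Y : E4) :
    poleForm μ Y X = height μ Y * height μ X - ⟪Y, X⟫ - (μ ^ 2)⁻¹ := rfl

lemma Kmu_eq_inv_poleForm (μ : ℝ) (X Y : E4) : Kmu μ X Y = (2 * poleForm μ Y X)⁻¹ := by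
  have hform : form14 (hat μ X - hat μ Y) (hat μ X - hat μ Y) =
      (height μ X - height μ Y) ^ 2 - ‖X - Y‖ ^ 2 := by
    rw [← Nq_eq_norm_sq, Nq, Fin.sum_univ_four]
    change (height μ X - height μ Y) * (height μ X - height μ Y) - (X 0 - Y 0) * (X 0 - Y 0) -
      (X 1 - Y 1) * (X 1 - Y 1) - (X 2 - Y 2) * (X 2 - Y 2) - (X 3 - Y 3) * (X 3 - Y 3) = _
    simp only [PiLp.sub_apply]
    ring
  rw [Kmu, hform, ← inv_neg, poleForm_apply, norm_sub_sq_real, real_inner_comm]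
  congr 1
  linear_combination -height_sq μ X - height_sq μ Y

lemma norm_sub_sq_le_poleForm (μ : ℝ) (X Y : E4) :
    (μ ^ 2)⁻¹ * ‖X - Y‖ ^ 2 ≤ 2 * (height μ Y * height μ X) * poleForm μ Y X := by
  have hCS : 0 ≤ ‖X‖ ^ 2 * ‖Y‖ ^ 2 - ⟪Y, X⟫ ^ 2 := by
    nlinarith [real_inner_mul_inner_self_le Y X, real_inner_self_eq_norm_sq X,
      real_inner_self_eq_norm_sq Y]
  have key : 2 * (height μ Y * height μ X) * poleForm μ Y X = poleForm μ Y X ^ 2 +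
      (μ ^ 2)⁻¹ * ‖X - Y‖ ^ 2 + (‖X‖ ^ 2 * ‖Y‖ ^ 2 - ⟪Y, X⟫ ^ 2) := by
    rw [norm_sub_sq_real, real_inner_comm, poleForm_apply]
    linear_combination height μ X ^ 2 * height_sq μ Y + ((μ ^ 2)⁻¹ + ‖Y‖ ^ 2) * height_sq μ X
  nlinarith [sq_nonneg (poleForm μ Y X)]

lemma poleForm_pos (hμ : μ ≠ 0) (hXY : X ≠ Y) : 0 < poleForm μ Y X := by
  have hdist : 0 < ‖X - Y‖ := norm_pos_iff.2 (sub_ne_zero.2 hXY)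
  have hwY := height_pos hμ Y
  have hwX := height_pos hμ X
  exact pos_of_mul_pos_right ((by positivity : 0 < (μ ^ 2)⁻¹ * ‖X - Y‖ ^ 2).trans_le
    (norm_sub_sq_le_poleForm μ X Y)) (by positivity)

lemma isSolutionAt_poleForm_inv (hμ : μ ≠ 0) (hXY : X ≠ Y) :
    IsSolutionAt μ (fun Z => (poleForm μ Y Z : ℂ)⁻¹) X :=
  isSolutionAt_affineForm_inv hμ (by rw [height_sq]; ring) (poleForm_pos hμ hXY).ne'

lemma isBigO_poleForm_inv (hμ : μ ≠ 0) (Y : E4) :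
    (fun X => (poleForm μ Y X : ℂ)⁻¹) =O[𝓝[≠] Y] fun X => (‖X - Y‖ ^ 2)⁻¹ := by
  have hheight : (fun X => μ ^ 2 * (2 * (height μ Y * height μ X))) =O[𝓝[≠] Y]
      fun _ => (1 : ℝ) :=
    ((show ContinuousAt (fun X => μ ^ 2 * (2 * (height μ Y * height μ X))) Y from by
      have := (contDiff_height hμ).continuous
      fun_prop).isBigO_one ℝ).mono nhdsWithin_le_nhds
  have hinv : (fun X => (poleForm μ Y X : ℂ)⁻¹) =O[𝓝[≠] Y]
      fun X => μ ^ 2 * (2 * (height μ Y * height μ X)) * (‖X - Y‖ ^ 2)⁻¹ := by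
    refine IsBigO.of_bound' (eventually_mem_nhdsWithin.mono fun X hX => ?_)
    have hq := poleForm_pos hμ hX
    have hdist : 0 < ‖X - Y‖ := norm_pos_iff.2 (sub_ne_zero.2 hX)
    have hbound := (inv_mul_le_iff₀ (by positivity)).1 (norm_sub_sq_le_poleForm μ X Y)
    rw [norm_inv, Complex.norm_real, Real.norm_of_nonneg hq.le]
    refine le_trans ?_ (Real.le_norm_self _)
    field_simp
    linarith
  simpa using hinv.trans (hheight.mul (isBigO_refl _ _))

lemma isBigO_fderiv_poleForm_inv (hμ : μ ≠ 0) (Y : E4) :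
    fderiv ℝ (fun X => (poleForm μ Y X : ℂ)⁻¹) =O[𝓝[≠] Y] fun X => (‖X - Y‖ ^ 3)⁻¹ := by
  have hC2 : ContDiff ℝ 2 fun X => (poleForm μ Y X : ℂ) := contDiff_affineForm hμ _ _ _
  have critical : fderiv ℝ (fun X => (poleForm μ Y X : ℂ)) Y = 0 := by
    ext v
    have hw := (height_pos hμ Y).ne'
    simp [poleForm, fderiv_affineForm_apply hμ, hw]
  have hgrad : fderiv ℝ (fun X => (poleForm μ Y X : ℂ)) =O[𝓝[≠] Y] fun X => ‖X - Y‖ := by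
    have hdiff := ((hC2.contDiffAt (x := Y)).fderiv_right (m := 1) le_rfl).differentiableAt
      one_ne_zero
    simpa [critical] using (hdiff.isBigO_sub.mono nhdsWithin_le_nhds).norm_right
  have hinv : (fun X => -((poleForm μ Y X : ℂ) ^ 2)⁻¹) =O[𝓝[≠] Y]
      fun X => ((‖X - Y‖ ^ 2)⁻¹) ^ 2 := by
    simpa using ((isBigO_poleForm_inv hμ Y).pow 2).neg_left
  refine (hinv.smul hgrad).congr' (eventually_mem_nhdsWithin.mono fun X hX => ?_)
    (eventually_mem_nhdsWithin.mono fun X hX => ?_)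
  · exact (fderiv_inv_eq_smul (hC2.differentiable two_ne_zero X)
      (mod_cast (poleForm_pos hμ hX).ne')).symm
  · have hdist : ‖X - Y‖ ≠ 0 := norm_ne_zero_iff.2 (sub_ne_zero.2 hX)
    simp only [smul_eq_mul]
    field_simp

end PoleForm

section ReflectedForm

/-- The slope `d` for which `poleForm μ Y + d * (height μ - sphereHeight μ R)` is again the
reciprocal of a solution of `□̃_μ`. -/
def reflectionSlope (μ R : ℝ) (Y : E4) : ℝ :=
  -2 * (μ ^ 2)⁻¹ * (sphereHeight μ R - height μ Y) / R ^ 2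

/-- The form that agrees with `poleForm μ Y` on the sphere of radius `R` but has no zero in the
ball. -/
def reflectedForm (μ R : ℝ) (Y : E4) : E4 → ℝ :=
  affineForm μ (height μ Y + reflectionSlope μ R Y) Y
    (-(μ ^ 2)⁻¹ - reflectionSlope μ R Y * sphereHeight μ R)

variable {μ R : ℝ} {X Y : E4}

lemma reflectedForm_apply (μ R : ℝ) (X Y : E4) :
    reflectedForm μ R Y X =
      poleForm μ Y X + reflectionSlope μ R Y * (height μ X - sphereHeight μ R) := by
  rw [reflectedForm, affineForm, poleForm_apply]
  ring

lemma sphereHeight_sq (μ R : ℝ) : sphereHeight μ R ^ 2 = (μ ^ 2)⁻¹ + R ^ 2 :=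
  Real.sq_sqrt (by positivity)

lemma reflectionSlope_mul_sq (hR : R ≠ 0) (μ : ℝ) (Y : E4) :
    reflectionSlope μ R Y * R ^ 2 = -2 * (μ ^ 2)⁻¹ * (sphereHeight μ R - height μ Y) :=
  div_mul_cancel₀ _ (pow_ne_zero 2 hR)

lemma height_le_sphereHeight (hX : ‖X‖ ≤ R) : height μ X ≤ sphereHeight μ R := by
  rw [height, sphereHeight, Nq_eq_norm_sq]
  gcongr

lemma height_lt_sphereHeight (hX : ‖X‖ < R) : height μ X < sphereHeight μ R := by
  rw [height, sphereHeight, Nq_eq_norm_sq]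
  gcongr

lemma reflectionSlope_neg (hμ : μ ≠ 0) (hY : ‖Y‖ < R) : reflectionSlope μ R Y < 0 := by
  have hR := (norm_nonneg Y).trans_lt hY
  have hW := sub_pos.2 (height_lt_sphereHeight (μ := μ) hY)
  have : 0 < (μ ^ 2)⁻¹ * (sphereHeight μ R - height μ Y) := by positivity
  exact div_neg_of_neg_of_pos (by linarith) (by positivity)

lemma reflectedForm_pos (hμ : μ ≠ 0) (hY : ‖Y‖ < R) (hX : ‖X‖ ≤ R) :
    0 < reflectedForm μ R Y X := by
  have hd := reflectionSlope_neg hμ hY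
  rw [reflectedForm_apply]
  rcases eq_or_ne X Y with rfl | hXY
  · have hq : poleForm μ X X = 0 := by
      rw [poleForm_apply, real_inner_self_eq_norm_sq]
      linear_combination height_sq μ X
    rw [hq, zero_add]
    exact mul_pos_of_neg_of_neg hd (sub_neg.2 (height_lt_sphereHeight hY))
  · exact add_pos_of_pos_of_nonneg (poleForm_pos hμ hXY)
      (mul_nonneg_of_nonpos_of_nonpos hd.le (sub_nonpos.2 (height_le_sphereHeight hX)))

lemma isSolutionAt_reflectedForm_inv (hμ : μ ≠ 0) (hY : ‖Y‖ < R) (hX : ‖X‖ ≤ R) :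
    IsSolutionAt μ (fun Z => (reflectedForm μ R Y Z : ℂ)⁻¹) X := by
  have hR := (norm_nonneg Y).trans_lt hY
  refine isSolutionAt_affineForm_inv hμ ?_ (reflectedForm_pos hμ hY hX).ne'
  linear_combination reflectionSlope μ R Y ^ 2 * sphereHeight_sq μ R +
    reflectionSlope μ R Y * reflectionSlope_mul_sq hR.ne' μ Y - (μ ^ 2)⁻¹ * height_sq μ Y

lemma reflectedForm_eq_poleForm (hX : ‖X‖ = R) : reflectedForm μ R Y X = poleForm μ Y X := by
  rw [reflectedForm_apply, height_of_norm_eq hX, sub_self, mul_zero, add_zero]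

lemma degOp_affineForm_of_norm_eq (hμ : μ ≠ 0) (a : ℝ) (b : E4) (c : ℝ) (hX : ‖X‖ = R) :
    degOp (fun Z => (affineForm μ a b c Z : ℂ)) X =
      (a * R ^ 2 / sphereHeight μ R - ⟪b, X⟫ : ℝ) := by
  rw [degOp_affineForm hμ, height_of_norm_eq hX, hX]

lemma degOp_poleForm_sub_degOp_reflectedForm (hμ : μ ≠ 0) (hR : 0 < R) (hX : ‖X‖ = R) :
    degOp (fun Z => (poleForm μ Y Z : ℂ)) X - degOp (fun Z => (reflectedForm μ R Y Z : ℂ)) X =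
      (2 * (μ ^ 2)⁻¹ * (sphereHeight μ R - height μ Y) / sphereHeight μ R : ℝ) := by
  simp only [poleForm, reflectedForm, degOp_affineForm_of_norm_eq hμ _ _ _ hX,
    ← Complex.ofReal_sub]
  congr 1
  linear_combination -(sphereHeight μ R)⁻¹ * reflectionSlope_mul_sq hR.ne' μ Y

lemma degOp_poleForm_add_degOp_reflectedForm (hμ : μ ≠ 0) (hR : 0 < R) (hX : ‖X‖ = R) :
    degOp (fun Z => (poleForm μ Y Z : ℂ)) X + degOp (fun Z => (reflectedForm μ R Y Z : ℂ)) X =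
      2 * (poleForm μ Y X : ℂ) := by
  have hW := (sphereHeight_pos μ hR).ne'
  rw [poleForm_apply, height_of_norm_eq hX]
  simp only [poleForm, reflectedForm, degOp_affineForm_of_norm_eq hμ _ _ _ hX]
  have hslope := reflectionSlope_mul_sq hR.ne' μ Y
  have hsq := sphereHeight_sq μ R
  norm_cast
  field_simp at hslope hsq ⊢
  linear_combination hslope - 2 * height μ Y * hsq

end ReflectedForm

section Orthogonality

lemma isBigO_inv_norm_sub_pow {E F : Type*} [NormedAddCommGroup E] [NormedAddCommGroup F]
    {g : E → F} {Y : E} (hg : ContinuousAt g Y) (n : ℕ) :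
    g =O[𝓝[≠] Y] fun X => (‖X - Y‖ ^ n)⁻¹ := by
  refine ((hg.isBigO_one ℝ).mono nhdsWithin_le_nhds).trans (IsBigO.of_bound' ?_)
  filter_upwards [eventually_mem_nhdsWithin,
    mem_nhdsWithin_of_mem_nhds (ball_mem_nhds Y one_pos)] with X hX hball
  have hdist : 0 < ‖X - Y‖ := norm_pos_iff.2 (sub_ne_zero.2 hX)
  rw [norm_one, Real.norm_of_nonneg (by positivity)]
  exact one_le_inv_iff₀.2 ⟨by positivity, pow_le_one₀ hdist.le (mem_ball_iff_norm.1 hball).le⟩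

lemma integrable_sphere_of_continuousAt {E F : Type*} [NormedAddCommGroup E] [NormedSpace ℝ E]
    [FiniteDimensional ℝ E] [MeasureSpace E] [BorelSpace E] [NormedAddCommGroup F]
    [(volume : Measure E).IsAddHaarMeasure] {g : E → F}
    {R : ℝ} (hR : 0 ≤ R) (hg : ∀ X, ‖X‖ = R → ContinuousAt g X) :
    Integrable (fun ω : sphere (0 : E) 1 => g (R • (ω : E))) (volume : Measure E).toSphere := by
  have hcont : Continuous fun ω : sphere (0 : E) 1 => g (R • (ω : E)) :=
    continuous_iff_continuousAt.2 fun ω =>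
      ContinuousAt.comp (f := fun ω : sphere (0 : E) 1 => R • (ω : E))
        (hg _ (norm_smul_of_mem_sphere hR ω.2)) (by fun_prop)
  exact integrable_of_continuous_of_compactSpace hcont

variable {μ R : ℝ} {f : E4 → ℂ} {X Y : E4}

lemma integral_degWronskian_poleForm_inv (hμ : μ ≠ 0) (hY : ‖Y‖ < R)
    (hf : ∀ X ∈ closedBall 0 R, IsSolutionAt μ f X) (hfY : f Y = 0) :
    ∫ ω : sphere (0 : E4) 1, degWronskian f (fun Z => (poleForm μ Y Z : ℂ)⁻¹) (R • (ω : E4))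
      ∂(volume : Measure E4).toSphere = 0 :=
  integral_degWronskian_eq_zero hμ hY hf hfY (fun _ hX => isSolutionAt_poleForm_inv hμ hX.2)
    (isBigO_poleForm_inv hμ Y) (isBigO_fderiv_poleForm_inv hμ Y)

lemma integral_degWronskian_reflectedForm_inv (hμ : μ ≠ 0) (hY : ‖Y‖ < R)
    (hf : ∀ X ∈ closedBall 0 R, IsSolutionAt μ f X) (hfY : f Y = 0) :
    ∫ ω : sphere (0 : E4) 1, degWronskian f (fun Z => (reflectedForm μ R Y Z : ℂ)⁻¹) (R • (ω : E4))
      ∂(volume : Measure E4).toSphere = 0 :=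
  have hC2 := (isSolutionAt_reflectedForm_inv hμ hY hY.le).1
  integral_degWronskian_eq_zero hμ hY hf hfY
    (fun _ hX => isSolutionAt_reflectedForm_inv hμ hY (mem_closedBall_zero_iff.1 hX.1))
    (isBigO_inv_norm_sub_pow hC2.continuousAt 2)
    (isBigO_inv_norm_sub_pow (hC2.fderiv_right (m := 1) le_rfl).continuousAt 3)

lemma degWronskian_inv {q : E4 → ℂ} (hq : DifferentiableAt ℝ q X) (h0 : q X ≠ 0) :
    degWronskian f (fun Z => (q Z)⁻¹) X = -(f X * degOp q X / q X ^ 2 + degOp f X / q X) := by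
  rw [degWronskian, degOp_inv hq h0]
  ring

variable (f) in
lemma degWronskian_poleForm_inv (hμ : μ ≠ 0) (hXY : X ≠ Y) :
    degWronskian f (fun Z => (poleForm μ Y Z : ℂ)⁻¹) X =
      -(f X * degOp (fun Z => (poleForm μ Y Z : ℂ)) X / poleForm μ Y X ^ 2 +
        degOp f X / poleForm μ Y X) :=
  degWronskian_inv ((contDiff_affineForm hμ _ _ _).differentiable two_ne_zero X)
    (mod_cast (poleForm_pos hμ hXY).ne')

variable (f) in
lemma degWronskian_reflectedForm_inv (hμ : μ ≠ 0) (hY : ‖Y‖ < R) (hX : ‖X‖ = R) :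
    degWronskian f (fun Z => (reflectedForm μ R Y Z : ℂ)⁻¹) X =
      -(f X * degOp (fun Z => (reflectedForm μ R Y Z : ℂ)) X / poleForm μ Y X ^ 2 +
        degOp f X / poleForm μ Y X) := by
  rw [← reflectedForm_eq_poleForm hX]
  exact degWronskian_inv ((contDiff_affineForm hμ _ _ _).differentiable two_ne_zero X)
    (mod_cast (reflectedForm_pos hμ hY hX.le).ne')

variable (f) in
lemma degWronskian_add_eq_Kmu_mul_tdeg (hμ : μ ≠ 0) (hY : ‖Y‖ < R) (hX : ‖X‖ = R) :
    degWronskian f (fun Z => (poleForm μ Y Z : ℂ)⁻¹) X +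
      degWronskian f (fun Z => (reflectedForm μ R Y Z : ℂ)⁻¹) X =
        -4 * (tdeg f X * Kmu μ X Y) := by
  have hXY := ne_of_norm_lt_of_norm_eq hY hX
  have hq : (poleForm μ Y X : ℂ) ≠ 0 := mod_cast (poleForm_pos hμ hXY).ne'
  have hsum := degOp_poleForm_add_degOp_reflectedForm (Y := Y) hμ ((norm_nonneg Y).trans_lt hY) hX
  rw [degWronskian_poleForm_inv f hμ hXY, degWronskian_reflectedForm_inv f hμ hY hX,
    Kmu_eq_inv_poleForm, tdeg]
  push_cast
  field_simp
  linear_combination -2 * f X * hsum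

variable (f) in
lemma degWronskian_sub_eq_mul (hμ : μ ≠ 0) (hY : ‖Y‖ < R) (hX : ‖X‖ = R) :
    degWronskian f (fun Z => (reflectedForm μ R Y Z : ℂ)⁻¹) X -
      degWronskian f (fun Z => (poleForm μ Y Z : ℂ)⁻¹) X =
        (2 * (μ ^ 2)⁻¹ * (sphereHeight μ R - height μ Y) /
          (sphereHeight μ R * poleForm μ Y X ^ 2) : ℝ) * f X := by
  have hXY := ne_of_norm_lt_of_norm_eq hY hX
  have hdiff := degOp_poleForm_sub_degOp_reflectedForm (Y := Y) hμ ((norm_nonneg Y).trans_lt hY) hX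
  rw [degWronskian_poleForm_inv f hμ hXY, degWronskian_reflectedForm_inv f hμ hY hX]
  push_cast at hdiff ⊢
  linear_combination f X / poleForm μ Y X ^ 2 * hdiff

lemma integrable_degWronskian_poleForm_inv (hμ : μ ≠ 0) (hY : ‖Y‖ < R)
    (hf : ∀ X ∈ closedBall 0 R, IsSolutionAt μ f X) :
    Integrable (fun ω : sphere (0 : E4) 1 => degWronskian f (fun Z => (poleForm μ Y Z : ℂ)⁻¹)
      (R • (ω : E4))) (volume : Measure E4).toSphere :=
  integrable_sphere_of_continuousAt ((norm_nonneg Y).trans hY.le) fun X hX =>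
    (contDiffAt_degWronskian (hf X (by simp [hX])).1
      (isSolutionAt_poleForm_inv hμ (ne_of_norm_lt_of_norm_eq hY hX)).1).continuousAt

lemma integrable_degWronskian_reflectedForm_inv (hμ : μ ≠ 0) (hY : ‖Y‖ < R)
    (hf : ∀ X ∈ closedBall 0 R, IsSolutionAt μ f X) :
    Integrable (fun ω : sphere (0 : E4) 1 => degWronskian f
      (fun Z => (reflectedForm μ R Y Z : ℂ)⁻¹) (R • (ω : E4))) (volume : Measure E4).toSphere :=
  integrable_sphere_of_continuousAt ((norm_nonneg Y).trans hY.le) fun X hX =>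
    (contDiffAt_degWronskian (hf X (by simp [hX])).1
      (isSolutionAt_reflectedForm_inv hμ hY hX.le).1).continuousAt

lemma integral_tdeg_mul_Kmu_eq_zero (hμ : μ ≠ 0) (hY : ‖Y‖ < R)
    (hf : ∀ X ∈ closedBall 0 R, IsSolutionAt μ f X) (hfY : f Y = 0) :
    ∫ ω : sphere (0 : E4) 1, tdeg f (R • (ω : E4)) * Kmu μ (R • (ω : E4)) Y
      ∂(volume : Measure E4).toSphere = 0 := by
  have hsum := integral_add (integrable_degWronskian_poleForm_inv hμ hY hf)
    (integrable_degWronskian_reflectedForm_inv hμ hY hf)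
  have hnorm (ω : sphere (0 : E4) 1) := norm_smul_of_mem_sphere ((norm_nonneg Y).trans hY.le) ω.2
  simp only [degWronskian_add_eq_Kmu_mul_tdeg f hμ hY (hnorm _), integral_const_mul,
    integral_degWronskian_poleForm_inv hμ hY hf hfY,
    integral_degWronskian_reflectedForm_inv hμ hY hf hfY, add_zero] at hsum
  exact (mul_eq_zero.1 hsum).resolve_left (by norm_num)

lemma integral_eq_zero_of_apply_zero_eq_zero (hμ : μ ≠ 0) (hR : 0 < R)
    (hf : ∀ X ∈ closedBall 0 R, IsSolutionAt μ f X) (hf0 : f 0 = 0) :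
    ∫ ω : sphere (0 : E4) 1, f (R • (ω : E4)) ∂(volume : Measure E4).toSphere = 0 := by
  have h0 : ‖(0 : E4)‖ < R := by simpa using hR
  have hdiff := integral_sub (integrable_degWronskian_reflectedForm_inv hμ h0 hf)
    (integrable_degWronskian_poleForm_inv hμ h0 hf)
  have hnorm (ω : sphere (0 : E4) 1) := norm_smul_of_mem_sphere hR.le ω.2
  have hradial (ω : sphere (0 : E4) 1) : poleForm μ 0 (R • (ω : E4)) =
      height μ 0 * (sphereHeight μ R - height μ 0) := by
    rw [poleForm_apply, height_of_norm_eq (hnorm ω), inner_zero_left]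
    have hsq : height μ 0 ^ 2 = (μ ^ 2)⁻¹ := by simp [height_sq]
    linear_combination hsq
  simp only [degWronskian_sub_eq_mul f hμ h0 (hnorm _), hradial, integral_const_mul,
    integral_degWronskian_poleForm_inv hμ h0 hf hf0,
    integral_degWronskian_reflectedForm_inv hμ h0 hf hf0, sub_zero] at hdiff
  refine (mul_eq_zero.1 hdiff).resolve_left (Complex.ofReal_ne_zero.2 ?_)
  have hw := height_pos hμ (0 : E4)
  have hW := sphereHeight_pos μ hR
  have hlt := sub_pos.2 (height_lt_sphereHeight (μ := μ) h0)
  positivity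

end Orthogonality

section RadialSolution

/-- The radial solution `1 / (height μ + μ⁻¹)` of `□̃_μ`, regular on all of `ℝ⁴` when `0 < μ`. -/
def radialSolution (μ : ℝ) (X : E4) : ℂ := (affineForm μ 1 0 μ⁻¹ X : ℂ)⁻¹

variable {μ R : ℝ} {f : E4 → ℂ} {X : E4}

lemma radialSolution_apply (μ : ℝ) (X : E4) :
    radialSolution μ X = ((height μ X : ℂ) + (μ : ℂ)⁻¹)⁻¹ := by
  simp [radialSolution, affineForm]

lemma height_zero (hμ : 0 < μ) : height μ 0 = μ⁻¹ := by
  rw [height, Nq_eq_norm_sq, norm_zero, zero_pow two_ne_zero, add_zero, ← inv_pow,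
    Real.sqrt_sq (inv_pos.2 hμ).le]

lemma affineForm_radial_ne_zero (hμ : 0 < μ) (X : E4) : affineForm μ 1 0 μ⁻¹ X ≠ 0 := by
  have := height_pos hμ.ne' X
  rw [affineForm, inner_zero_left, one_mul, sub_zero]
  positivity

lemma isSolutionAt_radialSolution (hμ : 0 < μ) (X : E4) : IsSolutionAt μ (radialSolution μ) X :=
  isSolutionAt_affineForm_inv hμ.ne' (by simp) (affineForm_radial_ne_zero hμ X)

lemma tdeg_radialSolution (hμ : 0 < μ) (hR : 0 < R) (hX : ‖X‖ = R) :
    tdeg (radialSolution μ) X = (μ⁻¹ / (sphereHeight μ R * (sphereHeight μ R + μ⁻¹)) : ℝ) := by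
  have hW := sphereHeight_pos μ hR
  have hsq := sphereHeight_sq μ R
  have hdeg : degOp (radialSolution μ) X = _ :=
    degOp_inv ((contDiff_affineForm hμ.ne' 1 0 μ⁻¹).differentiable two_ne_zero X)
      (mod_cast affineForm_radial_ne_zero hμ X)
  rw [tdeg, hdeg, radialSolution, degOp_affineForm_of_norm_eq hμ.ne' _ _ _ hX, affineForm,
    height_of_norm_eq hX, inner_zero_left, sub_zero, sub_zero, one_mul, one_mul]
  norm_cast
  field_simp at hsq ⊢
  linear_combination hsq

lemma tdeg_sub_const_mul_radialSolution (hμ : 0 < μ) (hR : 0 < R) (hX : ‖X‖ = R)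
    (hf : DifferentiableAt ℝ f X) (c : ℂ) :
    tdeg (fun Z => f Z - c * radialSolution μ Z) X =
      tdeg f X - c * (μ⁻¹ / (sphereHeight μ R * (sphereHeight μ R + μ⁻¹)) : ℝ) := by
  rw [← tdeg_radialSolution hμ hR hX, tdeg, tdeg, tdeg, degOp_sub_const_mul hf
    ((isSolutionAt_radialSolution hμ X).1.differentiableAt two_ne_zero)]
  ring

end RadialSolution

section PoissonFormula

variable {μ R : ℝ} {f : E4 → ℂ} {X Y : E4}

lemma toSphere_real_univ : (volume : Measure E4).toSphere.real Set.univ = 2 * Real.pi ^ 2 := by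
  rw [Measure.toSphere_real_apply_univ, measureReal_def,
    InnerProductSpace.volume_ball_of_dim_even (k := 2) (by simp)]
  simp only [finrank_euclideanSpace, Fintype.card_fin, Nat.cast_ofNat, ENNReal.ofReal_one, one_pow,
    Nat.factorial_two, one_mul, ENNReal.toReal_ofReal (by positivity : 0 ≤ Real.pi ^ 2 / 2)]
  ring

lemma integral_sphere_eq_mul_apply_zero (hμ : 0 < μ) (hR : 0 < R)
    (hf : ∀ X ∈ closedBall 0 R, IsSolutionAt μ f X) :
    ∫ ω : sphere (0 : E4) 1, f (R • (ω : E4)) ∂(volume : Measure E4).toSphere =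
      (4 * Real.pi ^ 2 * μ⁻¹ / (sphereHeight μ R + μ⁻¹) : ℝ) * f 0 := by
  let c : ℂ := f 0 / radialSolution μ 0
  have hradial0 : radialSolution μ 0 = (2 * (μ : ℂ)⁻¹)⁻¹ := by
    rw [radialSolution_apply, height_zero hμ]
    push_cast
    ring
  have hμ' : (μ : ℂ) ≠ 0 := mod_cast hμ.ne'
  have hzero := integral_eq_zero_of_apply_zero_eq_zero hμ.ne' hR
    (fun X hX => (hf X hX).sub_const_mul (isSolutionAt_radialSolution hμ X) c)
    (by simp [c, hradial0, hμ'])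
  have hint := integrable_sphere_of_continuousAt hR.le fun X hX =>
    (hf X (by simp [hX])).1.continuousAt
  have hnorm (ω : sphere (0 : E4) 1) := norm_smul_of_mem_sphere hR.le ω.2
  simp only [radialSolution_apply, height_of_norm_eq (hnorm _)] at hzero
  rw [integral_sub hint (integrable_const _), integral_const, toSphere_real_univ, sub_eq_zero]
    at hzero
  rw [hzero, Complex.real_smul]
  simp only [c, hradial0]
  push_cast
  field_simp
  ring

lemma reflectedForm_zero (hμ : 0 < μ) (hR : 0 < R) (Y : E4) :
    reflectedForm μ R Y 0 * (sphereHeight μ R + μ⁻¹) =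
      μ⁻¹ * (height μ Y + μ⁻¹) * (sphereHeight μ R - μ⁻¹) := by
  have hslope := reflectionSlope_mul_sq hR.ne' μ Y
  have hsq := sphereHeight_sq μ R
  rw [reflectedForm_apply, poleForm_apply, height_zero hμ, inner_zero_right]
  field_simp at hslope hsq ⊢
  linear_combination -μ * hslope - μ * reflectionSlope μ R Y * hsq

lemma integral_Kmu (hμ : 0 < μ) (hY : ‖Y‖ < R) :
    ∫ ω : sphere (0 : E4) 1, (Kmu μ (R • (ω : E4)) Y : ℂ) ∂(volume : Measure E4).toSphere =
      (2 * Real.pi ^ 2 / ((height μ Y + μ⁻¹) * (sphereHeight μ R - μ⁻¹)) : ℝ) := by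
  have hR := (norm_nonneg Y).trans_lt hY
  have hKmu (ω : sphere (0 : E4) 1) : (Kmu μ (R • (ω : E4)) Y : ℂ) =
      2⁻¹ * (reflectedForm μ R Y (R • (ω : E4)) : ℂ)⁻¹ := by
    rw [Kmu_eq_inv_poleForm, reflectedForm_eq_poleForm (norm_smul_of_mem_sphere hR.le ω.2)]
    push_cast
    ring
  have hW := sphereHeight_pos μ hR
  have hY0 := height_pos hμ.ne' Y
  have hzero := eq_div_of_mul_eq (by positivity) (reflectedForm_zero hμ hR Y)
  simp only [hKmu, integral_const_mul]
  rw [integral_sphere_eq_mul_apply_zero hμ hR fun X hX =>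
    isSolutionAt_reflectedForm_inv hμ.ne' hY (mem_closedBall_zero_iff.1 hX), hzero,
    inv_mul_eq_iff_eq_mul₀ two_ne_zero]
  norm_cast
  field_simp
  ring

lemma continuousAt_Kmu (hμ : μ ≠ 0) (hXY : X ≠ Y) :
    ContinuousAt (fun X => (Kmu μ X Y : ℂ)) X := by
  have hKmu : (fun X => (Kmu μ X Y : ℂ)) = fun X => 2⁻¹ * (poleForm μ Y X : ℂ)⁻¹ := by
    ext X
    rw [Kmu_eq_inv_poleForm]
    push_cast
    ring
  rw [hKmu]
  exact (isSolutionAt_poleForm_inv hμ hXY).1.continuousAt.const_mul 2⁻¹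

lemma continuousAt_tdeg_mul_Kmu (hμ : μ ≠ 0) (hf : ContDiffAt ℝ 2 f X) (hXY : X ≠ Y) :
    ContinuousAt (fun X => tdeg f X * Kmu μ X Y) X :=
  (hf.continuousAt.add (contDiffAt_degOp hf).continuousAt).mul (continuousAt_Kmu hμ hXY)

lemma integral_tdeg_mul_Kmu_eq_mul_integral_Kmu (hμ : 0 < μ) (hY : ‖Y‖ < R)
    (hf : ∀ X ∈ closedBall 0 R, IsSolutionAt μ f X) :
    ∫ ω : sphere (0 : E4) 1, tdeg f (R • (ω : E4)) * Kmu μ (R • (ω : E4)) Y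
      ∂(volume : Measure E4).toSphere =
        f Y / radialSolution μ Y * (μ⁻¹ / (sphereHeight μ R * (sphereHeight μ R + μ⁻¹)) : ℝ) *
          ∫ ω : sphere (0 : E4) 1, (Kmu μ (R • (ω : E4)) Y : ℂ)
            ∂(volume : Measure E4).toSphere := by
  have hR := (norm_nonneg Y).trans_lt hY
  have hsolution (X : E4) (hX : ‖X‖ = R) : IsSolutionAt μ f X := hf X (by simp [hX])
  have hradialY : radialSolution μ Y ≠ 0 :=
    inv_ne_zero (mod_cast affineForm_radial_ne_zero hμ Y)
  have hzero := integral_tdeg_mul_Kmu_eq_zero hμ.ne' hY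
    (fun X hX => (hf X hX).sub_const_mul (isSolutionAt_radialSolution hμ X)
      (f Y / radialSolution μ Y)) (by simp [hradialY])
  have hnorm (ω : sphere (0 : E4) 1) := norm_smul_of_mem_sphere hR.le ω.2
  have htdeg (ω : sphere (0 : E4) 1) := tdeg_sub_const_mul_radialSolution hμ hR (hnorm ω)
    ((hsolution _ (hnorm ω)).1.differentiableAt two_ne_zero) (f Y / radialSolution μ Y)
  have hint := integrable_sphere_of_continuousAt hR.le fun X hX =>
    continuousAt_tdeg_mul_Kmu hμ.ne' (hsolution X hX).1 (ne_of_norm_lt_of_norm_eq hY hX)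
  have hintK := integrable_sphere_of_continuousAt hR.le fun X hX =>
    continuousAt_Kmu hμ.ne' (ne_of_norm_lt_of_norm_eq hY hX)
  simp only [htdeg, sub_mul] at hzero
  rwa [integral_sub hint (hintK.const_mul _), integral_const_mul, sub_eq_zero] at hzero

theorem integral_tdeg_mul_Kmu (hμ : 0 < μ) (hY : ‖Y‖ < R)
    (hf : ∀ X ∈ closedBall 0 R, IsSolutionAt μ f X) :
    ∫ ω : sphere (0 : E4) 1, tdeg f (R • (ω : E4)) * Kmu μ (R • (ω : E4)) Y
      ∂(volume : Measure E4).toSphere =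
        (2 * Real.pi ^ 2 * μ⁻¹ / (sphereHeight μ R * R ^ 2) : ℝ) * f Y := by
  have hR := (norm_nonneg Y).trans_lt hY
  have hW := sphereHeight_pos μ hR
  have hwY := height_pos hμ.ne' Y
  have hradius : R ^ 2 = (sphereHeight μ R + μ⁻¹) * (sphereHeight μ R - μ⁻¹) := by
    linear_combination -sphereHeight_sq μ R
  rw [integral_tdeg_mul_Kmu_eq_mul_integral_Kmu hμ hY hf, integral_Kmu hμ hY,
    radialSolution_apply, hradius, div_inv_eq_mul, mul_assoc, mul_assoc, mul_comm]
  congr 1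
  norm_cast
  field_simp

end PoissonFormula

theorem stmt11_general {μ R : ℝ} (hμ : 0 < μ) (hR : 0 < R) {φ : E4 → ℂ}
    (hφ : ∀ X, Nq X ≤ R ^ 2 → ContDiffAt ℝ 2 φ X)
    (hsol : ∀ X, Nq X ≤ R ^ 2 → boxTilde μ φ X = 0) {Y : E4} (hY : Nq Y < R ^ 2) :
    φ Y = ((Real.sqrt (1 + μ ^ 2 * R ^ 2) / (2 * Real.pi ^ 2) / R : ℝ) : ℂ) *
      sphereInt R (fun X => tdeg φ X * ((Kmu μ X Y : ℝ) : ℂ)) := by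
  have hY' : ‖Y‖ < R := lt_of_pow_lt_pow_left₀ 2 hR.le (Nq_eq_norm_sq Y ▸ hY)
  have hball {X : E4} (hX : X ∈ closedBall 0 R) : Nq X ≤ R ^ 2 := by
    rw [Nq_eq_norm_sq]
    exact pow_le_pow_left₀ (norm_nonneg X) (mem_closedBall_zero_iff.1 hX) 2
  have hsqrt : √(1 + μ ^ 2 * R ^ 2) = μ * sphereHeight μ R := by
    rw [sphereHeight, ← Real.sqrt_sq hμ.le, ← Real.sqrt_mul (sq_nonneg μ), Real.sqrt_sq hμ.le]
    congr 1
    field_simp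
  have hW := sphereHeight_pos μ hR
  rw [sphereInt, integral_tdeg_mul_Kmu hμ hY' fun X hX => ⟨hφ X (hball hX), hsol X (hball hX)⟩,
    hsqrt, Complex.real_smul, ← mul_assoc, ← mul_assoc, ← Complex.ofReal_mul,
    ← Complex.ofReal_mul, eq_comm]
  convert one_mul (φ Y)
  norm_cast
  field_simp

/-- Poisson formula: if `φ` is real analytic and satisfies `□̃_μφ = 0` on an open set `U`
containing the closed ball `{N(X) ≤ R²}`, then for `N(Y) < R²`,
`φ(Y) = (√(1+μ²R²)/(2π²)) ∫_{S³_R} (d̃eg φ)(X) K_μ(X,Y) dS(X)/R`. -/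
theorem stmt11 (μ R : ℝ) (hμ : 0 < μ) (hR : 0 < R)
    (U : Set E4) (hU : IsOpen U) (hball : {X : E4 | Nq X ≤ R ^ 2} ⊆ U)
    (φ : E4 → ℂ) (hφ : AnalyticOnNhd ℝ φ U)
    (hsol : ∀ X ∈ U, boxTilde μ φ X = 0) :
    ∀ Y : E4, Nq Y < R ^ 2 →
      φ Y = ((Real.sqrt (1 + μ ^ 2 * R ^ 2) / (2 * Real.pi ^ 2) / R : ℝ) : ℂ) *
        sphereInt R (fun X => tdeg φ X * ((Kmu μ X Y : ℝ) : ℂ)) :=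
  fun _ => stmt11_general hμ hR (fun X hX => (hφ X (hball hX)).contDiffAt)
    fun X hX => hsol X (hball hX)
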